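/- Let T be a computable real number with 0 < T < 1. Then Z(T) = ∑_{p ∈ dom U} 2^{−|p|/T} and W(1,T) = ∑_{p ∈ dom U} |p|·2^{−|p|/T} converge with Z(T) > 0, and the statistical mechanical entropy S(T) = (1/T)·(W(1,T)/Z(T)) + log₂ Z(T) is a left-computable real number which is Chaitin T-random and T-compressible. -/

import Mathlib

open Filter

/-- A set of finite binary strings is prefix-free if no element of it is a
prefix of another (distinct) element of it. -/
def PrefixFree (S : Set (List Bool)) : Prop :=
  ∀ p ∈ S, ∀ q ∈ S, p <+: q → p = q

/-- A computer: a partial recursive function from finite binary strings to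
finite binary strings whose domain is a prefix-free set. -/
structure Computer where
  f : List Bool →. List Bool
  partrec : Partrec f
  prefixFree : PrefixFree {p | (f p).Dom}

/-- The domain of a computer. -/
def Computer.domain (C : Computer) : Set (List Bool) := {p | (C.f p).Dom}

/-- A computer `U` is optimal if every computer can be simulated on `U` with
only a constant increase in program length. -/
def IsOptimal (U : Computer) : Prop :=
  ∀ C : Computer, ∃ d : ℕ, ∀ p : List Bool, (C.f p).Dom →
    ∃ p' : List Bool, p'.length ≤ p.length + d ∧ ∀ s, s ∈ C.f p → s ∈ U.f p'

/-- Program-size complexity `H(s)`: the minimal length of a program `p`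
with `U(p) = s`. -/
noncomputable def H (U : Computer) (s : List Bool) : ℕ :=
  sInf {n | ∃ p : List Bool, p.length = n ∧ s ∈ U.f p}

/-- The `n`-th bit (`n ≥ 1`) of the base-two expansion of `x mod 1`
(the expansion chosen with infinitely many zeros). -/
noncomputable def binDigit (x : ℝ) (n : ℕ) : Bool :=
  decide (⌊Int.fract x * 2 ^ n⌋ % 2 = 1)

/-- The first `n` bits of the base-two expansion of `x mod 1` (with
infinitely many zeros). -/
noncomputable def bits (x : ℝ) (n : ℕ) : List Bool :=
  (List.range n).map fun i => binDigit x (i + 1)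

/-- A real `x` is weakly Chaitin `D`-random (w.r.t. the computer `U`). -/
def WeaklyChaitinRandom (U : Computer) (D x : ℝ) : Prop :=
  ∃ c : ℝ, ∀ n : ℕ, 1 ≤ n → D * n - c ≤ (H U (bits x n) : ℝ)

/-- A real `x` is Chaitin `D`-random (w.r.t. the computer `U`). -/
def ChaitinRandom (U : Computer) (D x : ℝ) : Prop :=
  Tendsto (fun n : ℕ => (H U (bits x n) : ℝ) - D * n) atTop atTop

/-- A real `x` is `D`-compressible (w.r.t. the computer `U`). -/
def DCompressible (U : Computer) (D x : ℝ) : Prop :=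
  Filter.limsup (fun n : ℕ => (H U (bits x n) : ℝ) / n) atTop ≤ D

/-- A computable real number. -/
def ComputableReal (T : ℝ) : Prop :=
  ∃ f : ℕ → ℚ, Computable f ∧ ∀ n : ℕ, 1 ≤ n → |T - (f n : ℝ)| < 1 / n

/-- A right-computable real number. -/
def RightComputable (T : ℝ) : Prop :=
  ∃ g : ℕ → ℚ, Computable g ∧ (∀ n, T ≤ (g n : ℝ)) ∧
    Tendsto (fun n => ((g n : ℚ) : ℝ)) atTop (nhds T)

/-- A left-computable real number. -/
def LeftComputable (T : ℝ) : Prop := RightComputable (-T)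

/-- The term `2 ^ (-|p| / T)` of the partition function `Z(T)`. -/
noncomputable def zterm (U : Computer) (T : ℝ) (p : U.domain) : ℝ :=
  (2 : ℝ) ^ (-((p : List Bool).length : ℝ) / T)

/-- The term `|p| ^ Q * 2 ^ (-|p| / T)` of `W(Q,T)`. -/
noncomputable def wterm (U : Computer) (Q T : ℝ) (p : U.domain) : ℝ :=
  ((p : List Bool).length : ℝ) ^ Q * (2 : ℝ) ^ (-((p : List Bool).length : ℝ) / T)

/-- The term `|p| * 2 ^ (-|p| / T)` of `W(1,T)`. -/
noncomputable def wlterm (U : Computer) (T : ℝ) (p : U.domain) : ℝ :=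
  ((p : List Bool).length : ℝ) * (2 : ℝ) ^ (-((p : List Bool).length : ℝ) / T)

/-- The term `|p| ^ 2 * 2 ^ (-|p| / T)` of `W(2,T)`. -/
noncomputable def wsqterm (U : Computer) (T : ℝ) (p : U.domain) : ℝ :=
  ((p : List Bool).length : ℝ) ^ 2 * (2 : ℝ) ^ (-((p : List Bool).length : ℝ) / T)

/-- A lower-computable function `f : ℕ⁺ → [0,∞)` (represented on `ℕ`,
with all conditions imposed on positive arguments). -/
def LowerComputableFun (f : ℕ → ℝ) : Prop :=
  ∃ a : ℕ → ℕ → ℚ, Computable₂ a ∧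
    (∀ k n : ℕ, 1 ≤ k → 1 ≤ n → (a k n : ℝ) ≤ f n) ∧
    (∀ n : ℕ, 1 ≤ n → Tendsto (fun k => ((a k n : ℚ) : ℝ)) atTop (nhds (f n)))

/-- A lower-computable semi-measure on finite binary strings. -/
def LowerComputableSemiMeasure (r : List Bool → ℝ) : Prop :=
  (∀ s, 0 ≤ r s) ∧ (∀ s, r s ≤ 1) ∧ Summable r ∧ (∑' s, r s) ≤ 1 ∧
    ∃ f : ℕ → List Bool → ℚ, Computable₂ f ∧
      (∀ n s, ((f n s : ℚ) : ℝ) ≤ r s) ∧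
      (∀ s, Tendsto (fun n => ((f n s : ℚ) : ℝ)) atTop (nhds (r s)))

/-- A universal probability. -/
def UniversalProbability (m : List Bool → ℝ) : Prop :=
  LowerComputableSemiMeasure m ∧
    ∀ r : List Bool → ℝ, LowerComputableSemiMeasure r →
      ∃ c : ℝ, 0 < c ∧ ∀ s, c * r s ≤ m s

/-! Let `Z_m`, `W_m` and `S_m` be the partition function, the energy and the entropy of the finite
system formed by the programs found to halt within `m` steps. Once all short programs have been
found, every new program is longer than twice the mean energy, so the increments of `S_m` are
comparable to the sums of `(|p| + 1) * 2 ^ (-|p| / T)` over the new programs `p`. In particular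
`S_m` increases to `S(T)`, which is therefore left-computable.

*Randomness.* From the first `n` bits of `S(T)` one computes a stage `m` with
`S(T) - S_m = O(2 ^ (-n))`, hence a string which is not the output of any program found by then. Its
programs `p` satisfy `|p| ≤ H(S(T)_n) + O(1)` and `|p| * 2 ^ (-|p| / T) = O(2 ^ (-n))`, that is,
`|p| ≥ T * n + T * log₂ |p| - O(1)`; the logarithmic gain makes `H(S(T)_n) - T * n` diverge.

*Compressibility.* For `T < T' ≤ 1`, the tail `S(T) - S_m` is bounded by a multiple of the tail of
`∑ 2 ^ (-|p| / T')`, hence by the `1 / T'`-th power of the tail of Chaitin's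
`Ω = ∑ 2 ^ (-|p|)`. So about `T' * n` bits of `Ω` suffice to compute `n` bits of `S(T)`. -/

section

variable {α β γ : Type*} [Primcodable α] [Primcodable β] [Primcodable γ]

attribute [local fun_prop] Computable Computable.id Computable.const Computable.comp
  Computable.encode
-- Otherwise unification inside `fun_prop` unfolds these when it matches goals about `decide`.
attribute [local irreducible] Nat.unpair Nat.pow Nat.decLe instDecidableAnd

@[fun_prop]
theorem computable_pair {f : α → β} {g : α → γ} (hf : Computable f) (hg : Computable g) :
    Computable fun a => (f a, g a) :=
  hf.pair hg

@[fun_prop]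
theorem computable_fst {f : α → β × γ} (hf : Computable f) : Computable fun a => (f a).1 :=
  Computable.fst.comp hf

@[fun_prop]
theorem computable_snd {f : α → β × γ} (hf : Computable f) : Computable fun a => (f a).2 :=
  Computable.snd.comp hf

@[fun_prop]
theorem computable_unpair {f : α → ℕ} (hf : Computable f) : Computable fun a => (f a).unpair :=
  Computable.unpair.comp hf

@[fun_prop]
theorem computable_add {f g : α → ℕ} (hf : Computable f) (hg : Computable g) :
    Computable fun a => f a + g a :=
  Primrec.nat_add.to_comp.comp hf hg

@[fun_prop]
theorem computable_sub {f g : α → ℕ} (hf : Computable f) (hg : Computable g) :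
    Computable fun a => f a - g a :=
  Primrec.nat_sub.to_comp.comp hf hg

@[fun_prop]
theorem computable_mul {f g : α → ℕ} (hf : Computable f) (hg : Computable g) :
    Computable fun a => f a * g a :=
  Primrec.nat_mul.to_comp.comp hf hg

@[fun_prop]
theorem computable_div {f g : α → ℕ} (hf : Computable f) (hg : Computable g) :
    Computable fun a => f a / g a :=
  Primrec.nat_div.to_comp.comp hf hg

@[fun_prop]
theorem computable_mod {f g : α → ℕ} (hf : Computable f) (hg : Computable g) :
    Computable fun a => f a % g a :=
  Primrec.nat_mod.to_comp.comp hf hg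

@[fun_prop]
theorem computable_max {f g : α → ℕ} (hf : Computable f) (hg : Computable g) :
    Computable fun a => max (f a) (g a) :=
  Primrec.nat_max.to_comp.comp hf hg

@[fun_prop]
theorem computable_pow {f g : α → ℕ} (hf : Computable f) (hg : Computable g) :
    Computable fun a => f a ^ g a :=
  (Primrec₂.unpaired'.1 Nat.Primrec.pow).to_comp.comp hf hg

@[fun_prop]
theorem computable_decide_le {f g : α → ℕ} (hf : Computable f) (hg : Computable g) :
    Computable fun a => decide (f a ≤ g a) :=
  Primrec.nat_le.decide.to_comp.comp hf hg

@[fun_prop]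
theorem computable_decide_lt {f g : α → ℕ} (hf : Computable f) (hg : Computable g) :
    Computable fun a => decide (f a < g a) :=
  Primrec.nat_lt.decide.to_comp.comp hf hg

@[fun_prop]
theorem computable_decide_eq {f g : α → ℕ} (hf : Computable f) (hg : Computable g) :
    Computable fun a => decide (f a = g a) :=
  Primrec.eq.decide.to_comp.comp hf hg

@[fun_prop]
theorem computable_decide_and {p q : α → Prop} [DecidablePred p] [DecidablePred q]
    (hp : Computable fun a => decide (p a)) (hq : Computable fun a => decide (q a)) :
    Computable fun a => decide (p a ∧ q a) :=
  (Primrec.and.to_comp.comp hp hq).of_eq fun a => (Bool.decide_and (p a) (q a)).symm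

@[fun_prop]
theorem computable_ite {p : α → Prop} [DecidablePred p] {f g : α → β}
    (hp : Computable fun a => decide (p a)) (hf : Computable f) (hg : Computable g) :
    Computable fun a => if p a then f a else g a :=
  (Computable.cond hp hf hg).of_eq fun a => Bool.cond_decide (p a) (f a) (g a)

@[fun_prop]
theorem computable_sum_range {f : α → ℕ → ℕ} {k : α → ℕ}
    (hf : Computable fun x : α × ℕ => f x.1 x.2) (hk : Computable k) :
    Computable fun a => ∑ i ∈ Finset.range (k a), f a i := by
  have hrec : Computable fun a => (Nat.rec 0 (fun i s => s + f a i) (k a) : ℕ) :=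
    Computable.nat_rec hk (Computable.const 0) (h := fun a x => x.2 + f a x.1) <| by
      change Computable fun y : α × ℕ × ℕ => y.2.2 + f y.1 y.2.1
      fun_prop
  refine hrec.of_eq fun a => ?_
  induction k a with
  | zero => rfl
  | succ n ih => rw [Finset.sum_range_succ, ← ih]

theorem exists_computable_of_forall_exists {p : α → ℕ → Prop} [∀ a n, Decidable (p a n)]
    (hp : Computable fun x : α × ℕ => decide (p x.1 x.2)) (h : ∀ a, ∃ n, p a n) :
    ∃ f : α → ℕ, Computable f ∧ ∀ a, p a (f a) := by
  have hfind : Partrec fun a => Nat.rfind fun n => Part.some (decide (p a n)) :=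
    Partrec.rfind (Computable.to₂ hp).partrec₂
  have hdom : ∀ a, ∃ n, n ∈ Nat.rfind fun n => Part.some (decide (p a n)) := fun a =>
    let ⟨_, hn⟩ := h a
    let ⟨m, hm, _⟩ := Nat.rfind_min' (p := fun n => decide (p a n)) (decide_eq_true hn)
    ⟨m, hm⟩
  choose f hf using hdom
  exact ⟨f, hfind.of_eq_tot hf, fun a => by simpa using Nat.rfind_spec (hf a)⟩

/-- The code of a rational number as the pair of its numerator and denominator. The `Primcodable`
instance of `ℚ` numbers the rationals by the rank of this code among all codes, so computing with
rationals requires recovering the code from its rank. -/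
def ratCode (q : ℚ) : ℕ := Nat.pair (Encodable.encode q.num) q.den

/-- The range of `ratCode`, with coprimality phrased as a count of common divisors; the code `n` of
an integer `z` satisfies `(n + 1) / 2 = |z|`. -/
def IsRatCode (y : ℕ) : Prop :=
  0 < y.unpair.2 ∧
    ∑ d ∈ Finset.range (y.unpair.2 + 1),
      (if (y.unpair.1 + 1) / 2 % (d + 1) = 0 ∧ y.unpair.2 % (d + 1) = 0 then 1 else 0) ≤ 1

instance : DecidablePred IsRatCode := fun _ => inferInstanceAs (Decidable (_ ∧ _))

@[fun_prop]
theorem computable_decide_isRatCode {f : α → ℕ} (hf : Computable f) :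
    Computable fun a => decide (IsRatCode (f a)) := by
  have hcode : Computable fun y : ℕ => decide (0 < y.unpair.2 ∧
      ∑ d ∈ Finset.range (y.unpair.2 + 1),
        (if (y.unpair.1 + 1) / 2 % (d + 1) = 0 ∧ y.unpair.2 % (d + 1) = 0 then 1 else 0) ≤ 1) := by
    fun_prop
  exact hcode.comp hf

theorem coprime_iff_sum_common_divisors_le_one {a b : ℕ} (hb : 0 < b) :
    a.Coprime b ↔
      ∑ d ∈ Finset.range (b + 1), (if a % (d + 1) = 0 ∧ b % (d + 1) = 0 then 1 else 0) ≤ 1 := by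
  simp only [Finset.sum_boole, Nat.cast_id, Finset.card_le_one, Finset.mem_filter,
    Finset.mem_range, ← Nat.dvd_iff_mod_eq_zero]
  constructor
  · rintro hab x ⟨-, hx⟩ y ⟨-, hy⟩
    have := Nat.eq_one_of_dvd_coprimes hab hx.1 hx.2
    have := Nat.eq_one_of_dvd_coprimes hab hy.1 hy.2
    lia
  · intro hunique
    have hgcd : 0 < a.gcd b := Nat.gcd_pos_of_pos_right _ hb
    have hle := Nat.le_of_dvd hb (Nat.gcd_dvd_right a b)
    have := hunique (a.gcd b - 1)
      ⟨by lia, by simp [Nat.sub_add_cancel hgcd, Nat.gcd_dvd_left, Nat.gcd_dvd_right]⟩ 0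
      ⟨by lia, by simp⟩
    exact (by lia : a.gcd b = 1)

theorem encode_int_ofNat (n : ℕ) : Encodable.encode (n : ℤ) = 2 * n := rfl

theorem encode_int_negSucc (n : ℕ) : Encodable.encode (Int.negSucc n) = 2 * n + 1 := rfl

theorem natAbs_eq_encode (z : ℤ) : z.natAbs = (Encodable.encode z + 1) / 2 := by
  cases z with
  | ofNat n => rw [Int.ofNat_eq_natCast, encode_int_ofNat]; lia
  | negSucc n => rw [encode_int_negSucc]; lia

theorem toNat_eq_encode (z : ℤ) :
    z.toNat = if Encodable.encode z % 2 = 0 then Encodable.encode z / 2 else 0 := by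
  cases z with
  | ofNat n => rw [Int.ofNat_eq_natCast, encode_int_ofNat]; lia
  | negSucc n => rw [encode_int_negSucc]; lia

theorem toNat_neg_eq_encode (z : ℤ) :
    (-z).toNat = if Encodable.encode z % 2 = 0 then 0 else (Encodable.encode z + 1) / 2 := by
  cases z with
  | ofNat n => rw [Int.ofNat_eq_natCast, encode_int_ofNat]; lia
  | negSucc n => rw [encode_int_negSucc]; lia

theorem encode_int_surjective : Function.Surjective (Encodable.encode : ℤ → ℕ) := fun n => by
  rcases Nat.even_or_odd' n with ⟨k, rfl | rfl⟩
  · exact ⟨k, encode_int_ofNat k⟩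
  · exact ⟨Int.negSucc k, encode_int_negSucc k⟩

theorem mem_range_ratCode {y : ℕ} : y ∈ Set.range ratCode ↔ IsRatCode y := by
  constructor
  · rintro ⟨q, rfl⟩
    simp only [IsRatCode, ratCode, Nat.unpair_pair]
    refine ⟨q.den_pos, ?_⟩
    rw [← coprime_iff_sum_common_divisors_le_one q.den_pos, ← natAbs_eq_encode]
    exact q.reduced
  · rintro ⟨hden, hcop⟩
    obtain ⟨z, hz⟩ := encode_int_surjective y.unpair.1
    rw [← coprime_iff_sum_common_divisors_le_one hden, ← hz, ← natAbs_eq_encode] at hcop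
    exact ⟨⟨z, y.unpair.2, hden.ne', hcop⟩, by simp [ratCode, hz, Nat.pair_unpair]⟩

theorem isRatCode_ratCode (q : ℚ) : IsRatCode (ratCode q) := mem_range_ratCode.1 ⟨q, rfl⟩

theorem encode_rat_eq_count (q : ℚ) :
    @Encodable.encode ℚ Primcodable.toEncodable q = Nat.count IsRatCode (ratCode q) := by
  change (List.range (ratCode q)).countP
    (fun y => @decide (y ∈ Set.range ratCode) (@Encodable.decidableRangeEncode ℚ _ y)) = _
  exact List.countP_congr fun y _ =>
    (@decide_eq_true_iff _ (_)).trans <| mem_range_ratCode.trans decide_eq_true_iff.symm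

theorem computable_count_isRatCode : Computable (Nat.count IsRatCode) := by
  have hsum : Computable fun n =>
      ∑ y ∈ Finset.range n, if IsRatCode y then 1 else 0 := by fun_prop
  exact hsum.of_eq fun n => by simp [Nat.count_eq_card_filter_range]

theorem computable_ratCode : Computable ratCode := by
  have hcount := computable_count_isRatCode
  obtain ⟨f, hf, hcode⟩ := exists_computable_of_forall_exists
    (p := fun (q : ℚ) k => IsRatCode k ∧ Nat.count IsRatCode k =
      @Encodable.encode ℚ Primcodable.toEncodable q)
    (by fun_prop) fun q => ⟨ratCode q, isRatCode_ratCode q, (encode_rat_eq_count q).symm⟩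
  refine hf.of_eq fun q => ?_
  exact Nat.count_injective (hcode q).1 (isRatCode_ratCode q)
    ((hcode q).2.trans (encode_rat_eq_count q))

@[fun_prop]
theorem computable_den {f : α → ℚ} (hf : Computable f) : Computable fun a => (f a).den := by
  have hcode := computable_ratCode
  exact (show Computable fun a => (ratCode (f a)).unpair.2 by fun_prop).of_eq fun a => by
    simp [ratCode]

theorem computable_encode_num {f : α → ℚ} (hf : Computable f) :
    Computable fun a => Encodable.encode (f a).num := by
  have hcode := computable_ratCode
  exact (show Computable fun a => (ratCode (f a)).unpair.1 by fun_prop).of_eq fun a => by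
    simp [ratCode]

@[fun_prop]
theorem computable_toNat_num {f : α → ℚ} (hf : Computable f) :
    Computable fun a => (f a).num.toNat := by
  have hnum := computable_encode_num hf
  simp only [toNat_eq_encode]
  fun_prop

@[fun_prop]
theorem computable_toNat_neg_num {f : α → ℚ} (hf : Computable f) :
    Computable fun a => (-(f a).num).toNat := by
  have hnum := computable_encode_num hf
  simp only [toNat_neg_eq_encode]
  fun_prop

theorem rat_eq_iff_of_mul_eq_sub {r : ℚ} {x y d : ℕ} (hd : 0 < d) (hr : r * d = x - y) (q : ℚ) :
    q.num.toNat * d + y * q.den = x * q.den + (-q.num).toNat * d ↔ q = r := by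
  have hsplit : (q.num.toNat : ℚ) - (-q.num).toNat = q * q.den := by
    rw [Rat.mul_den_eq_num]
    exact_mod_cast (by lia : (q.num.toNat : ℤ) - (-q.num).toNat = q.num)
  have hne : (q.den * d : ℚ) ≠ 0 := by
    exact_mod_cast (mul_pos q.den_pos hd).ne'
  rw [← @Nat.cast_inj ℚ, ← mul_left_inj' (a := q) (b := r) hne]
  push_cast
  constructor <;> intro h
  · linear_combination h - d * hsplit - q.den * hr
  · linear_combination h + d * hsplit + q.den * hr

theorem computable_rat_of_mul_eq_sub {r : α → ℚ} {x y d : α → ℕ} (hx : Computable x)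
    (hy : Computable y) (hd : Computable d) (hd_pos : ∀ a, 0 < d a)
    (hr : ∀ a, r a * d a = x a - y a) : Computable r := by
  obtain ⟨ρ, hρ, hρ_surj⟩ : ∃ ρ : ℕ → ℚ, Computable ρ ∧ Function.Surjective ρ :=
    ⟨Denumerable.ofNat ℚ, Computable.ofNat ℚ, fun q => ⟨_, Denumerable.ofNat_encode q⟩⟩
  obtain ⟨f, hf, hcode⟩ := exists_computable_of_forall_exists
    (p := fun a n => (ρ n).num.toNat * d a + y a * (ρ n).den =
      x a * (ρ n).den + (-(ρ n).num).toNat * d a)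
    (by fun_prop) fun a => (hρ_surj (r a)).imp fun n hn =>
      (rat_eq_iff_of_mul_eq_sub (hd_pos a) (hr a) _).2 hn
  exact (hρ.comp hf).of_eq fun a => (rat_eq_iff_of_mul_eq_sub (hd_pos a) (hr a) _).1 (hcode a)

/-! ### Uniformly computable families of real numbers -/

/-- `UniformlyComputable x` says that the reals `x a` are computable uniformly in `a`: the natural
number `q a n` is an approximation of `2 ^ n * x a` whose error is bounded by a computable function
of `a` alone. Allowing any such error, instead of `1`, makes closure under arithmetic immediate, and
natural approximants suffice because all families considered here are nonnegative. -/
def UniformlyComputable (x : α → ℝ) : Prop :=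
  ∃ (q : α → ℕ → ℕ) (E : α → ℕ), (Computable fun y : α × ℕ => q y.1 y.2) ∧ Computable E ∧
    ∀ a n, |x a * 2 ^ n - q a n| ≤ E a

theorem abs_sub_div_mul_two_pow (x q : ℝ) (n : ℕ) :
    |x - q / 2 ^ n| * 2 ^ n = |x * 2 ^ n - q| := by
  have hpos : (0 : ℝ) < 2 ^ n := by positivity
  rw [← div_mul_cancel₀ q hpos.ne', ← sub_mul, abs_mul, abs_of_pos hpos, div_mul_cancel₀ q hpos.ne']

theorem abs_div_sub_natDiv_le_one (k d : ℕ) : |(k : ℝ) / d - (k / d : ℕ)| ≤ 1 := by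
  rw [← Nat.floor_div_eq_div (K := ℝ), abs_le]
  constructor
  · linarith [Nat.floor_le (by positivity : (0 : ℝ) ≤ k / d)]
  · linarith [Nat.lt_floor_add_one ((k : ℝ) / d)]

theorem abs_sub_max_le {y c q : ℝ} (hy : c ≤ y) : |y - max q c| ≤ |y - q| := by
  rw [← max_eq_left hy]
  exact abs_max_sub_max_le_abs y q c |>.trans_eq (by rw [max_eq_left hy])

theorem exists_natLog_approx {Y : ℕ} (hY : 0 < Y) (k : ℕ) :
    ∃ u, 2 ^ u ≤ Y ^ k ∧ Y ^ k < 2 ^ (u + 1) :=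
  ⟨Nat.log 2 (Y ^ k), Nat.pow_log_le_self 2 (pow_pos hY k).ne',
    Nat.lt_pow_succ_log_self one_lt_two _⟩

theorem abs_natCast_mul_logb_sub_le_one {Y k u : ℕ} (hY : 0 < Y) (hu : 2 ^ u ≤ Y ^ k)
    (hu' : Y ^ k < 2 ^ (u + 1)) : |k * Real.logb 2 Y - u| ≤ 1 := by
  have hY' : (0 : ℝ) < (Y : ℝ) ^ k := by positivity
  have hlow : (u : ℝ) ≤ Real.logb 2 ((Y : ℝ) ^ k) := by
    rw [Real.le_logb_iff_rpow_le one_lt_two hY', Real.rpow_natCast]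
    exact_mod_cast hu
  have hupp : Real.logb 2 ((Y : ℝ) ^ k) ≤ (u + 1 : ℕ) := by
    rw [Real.logb_le_iff_le_rpow one_lt_two hY', Real.rpow_natCast]
    exact_mod_cast hu'.le
  rw [Real.logb_pow] at hlow hupp
  push_cast at hupp
  exact abs_le.2 ⟨by linarith, by linarith⟩

theorem abs_logb_two_sub_logb_two_le {a b : ℝ} (ha : 1 ≤ a) (hb : 1 ≤ b) :
    |Real.logb 2 a - Real.logb 2 b| ≤ 2 * |a - b| := by
  wlog hba : b ≤ a generalizing a b
  · rw [abs_sub_comm, abs_sub_comm a]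
    exact this hb ha (le_of_not_ge hba)
  have hb_pos : 0 < b := by linarith
  rw [abs_of_nonneg (sub_nonneg.2 (Real.logb_le_logb_of_le one_lt_two hb_pos hba)),
    abs_of_nonneg (sub_nonneg.2 hba), ← Real.logb_div (by linarith) hb_pos.ne', Real.logb,
    div_le_iff₀ (Real.log_pos one_lt_two)]
  calc Real.log (a / b) ≤ a / b - 1 := Real.log_le_sub_one_of_pos (by positivity)
    _ = (a - b) / b := by rw [sub_div, div_self hb_pos.ne']
    _ ≤ a - b := div_le_self (sub_nonneg.2 hba) hb
    _ = 2 * (a - b) * (1 / 2) := by ring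
    _ ≤ 2 * (a - b) * Real.log 2 := by
        gcongr
        linarith [Real.log_two_gt_d9]

theorem abs_two_rpow_neg_sub_le {x y : ℝ} (hx : 0 ≤ x) (hy : 0 ≤ y) :
    |(2 : ℝ) ^ (-x) - 2 ^ (-y)| ≤ |x - y| := by
  wlog hxy : x ≤ y generalizing x y
  · rw [abs_sub_comm, abs_sub_comm x]
    exact this hy hx (le_of_not_ge hxy)
  have hfactor : (2 : ℝ) ^ (-x) - 2 ^ (-y) = 2 ^ (-x) * (1 - 2 ^ (-(y - x))) := by
    rw [mul_sub, ← Real.rpow_add two_pos]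
    ring_nf
  have hx_le : (2 : ℝ) ^ (-x) ≤ 1 :=
    Real.rpow_le_one_of_one_le_of_nonpos one_le_two (neg_nonpos.2 hx)
  have hd_le : (2 : ℝ) ^ (-(y - x)) ≤ 1 :=
    Real.rpow_le_one_of_one_le_of_nonpos one_le_two (neg_nonpos.2 (sub_nonneg.2 hxy))
  have hd_ge : 1 - (y - x) ≤ (2 : ℝ) ^ (-(y - x)) := by
    rw [Real.rpow_def_of_pos two_pos]
    nlinarith [Real.add_one_le_exp (Real.log 2 * -(y - x)), Real.log_two_lt_d9]
  rw [hfactor, abs_of_nonneg (mul_nonneg (by positivity) (sub_nonneg.2 hd_le)), abs_sub_comm,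
    abs_of_nonneg (sub_nonneg.2 hxy)]
  calc (2 : ℝ) ^ (-x) * (1 - 2 ^ (-(y - x))) ≤ 1 - 2 ^ (-(y - x)) :=
        mul_le_of_le_one_left (sub_nonneg.2 hd_le) hx_le
    _ ≤ y - x := by linarith

theorem exists_mul_pow_le_lt {b k : ℕ} (hb : 0 < b) (hk : k ≠ 0) (N : ℕ) :
    ∃ u, u ^ k * b ≤ N ∧ N < (u + 1) ^ k * b := by
  have hex : ∃ u, N < (u + 1) ^ k * b :=
    ⟨N, (Nat.lt_succ_self N).trans_le ((Nat.le_self_pow hk _).trans (Nat.le_mul_of_pos_right _ hb))⟩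
  refine ⟨Nat.find hex, ?_, Nat.find_spec hex⟩
  cases hu : Nat.find hex with
  | zero => simp [hk]
  | succ u => exact not_lt.1 (Nat.find_min hex (hu ▸ Nat.lt_succ_self u))

theorem abs_rpow_neg_mul_two_pow_sub_le_one {u c n : ℕ}
    (hu : u ^ 2 ^ n * 2 ^ c ≤ 2 ^ (n * 2 ^ n)) (hu' : 2 ^ (n * 2 ^ n) < (u + 1) ^ 2 ^ n * 2 ^ c) :
    |(2 : ℝ) ^ (-(c / 2 ^ n : ℝ)) * 2 ^ n - u| ≤ 1 := by
  set v : ℝ := 2 ^ (-(c / 2 ^ n : ℝ)) * 2 ^ n with hv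
  have hv_pow : v ^ 2 ^ n * 2 ^ c = 2 ^ (n * 2 ^ n) := by
    have hroot : ((2 : ℝ) ^ (-(c / 2 ^ n : ℝ))) ^ 2 ^ n * 2 ^ c = 1 := by
      rw [← Real.rpow_natCast, ← Real.rpow_mul two_pos.le, ← Real.rpow_natCast 2 c,
        ← Real.rpow_add two_pos]
      push_cast
      rw [neg_mul, div_mul_cancel₀ _ (by positivity), neg_add_cancel, Real.rpow_zero]
    rw [hv, mul_pow, mul_right_comm, hroot, one_mul, ← pow_mul]
  have hlow : (u : ℝ) ≤ v := by
    refine (pow_le_pow_iff_left₀ (by positivity) (by positivity) (Nat.two_pow_pos n).ne').1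
      (le_of_mul_le_mul_right ?_ (by positivity : (0 : ℝ) < 2 ^ c))
    rw [hv_pow]
    exact_mod_cast hu
  have hupp : v ≤ u + 1 := by
    refine (pow_le_pow_iff_left₀ (by positivity) (by positivity) (Nat.two_pow_pos n).ne').1
      (le_of_mul_le_mul_right ?_ (by positivity : (0 : ℝ) < 2 ^ c))
    rw [hv_pow]
    exact_mod_cast hu'.le
  exact abs_le.2 ⟨by linarith, by linarith⟩

namespace UniformlyComputable

theorem of_ratio {x : α → ℝ} {k d : α → ℕ → ℕ} {E : α → ℕ}
    (hk : Computable fun y : α × ℕ => k y.1 y.2) (hd : Computable fun y : α × ℕ => d y.1 y.2)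
    (hE : Computable E) (h : ∀ a n, |x a - k a n / d a n| * 2 ^ n ≤ E a) :
    UniformlyComputable x := by
  refine ⟨fun a n => k a n * 2 ^ n / d a n, fun a => E a + 1, by fun_prop, by fun_prop,
    fun a n => ?_⟩
  have hfloor := abs_div_sub_natDiv_le_one (k a n * 2 ^ n) (d a n)
  push_cast at hfloor ⊢
  calc |x a * 2 ^ n - (k a n * 2 ^ n / d a n : ℕ)|
      ≤ |x a * 2 ^ n - k a n * 2 ^ n / d a n| +
          |(k a n : ℝ) * 2 ^ n / d a n - (k a n * 2 ^ n / d a n : ℕ)| := abs_sub_le _ _ _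
    _ = |x a - k a n / d a n| * 2 ^ n +
          |(k a n : ℝ) * 2 ^ n / d a n - (k a n * 2 ^ n / d a n : ℕ)| := by
        rw [mul_div_right_comm, ← sub_mul, abs_mul, abs_of_pos (by positivity : (0 : ℝ) < 2 ^ n)]
    _ ≤ E a + 1 := add_le_add (h a n) hfloor

theorem comp {x : α → ℝ} (hx : UniformlyComputable x) {g : β → α} (hg : Computable g) :
    UniformlyComputable fun b => x (g b) := by
  obtain ⟨q, E, hq, hE, h⟩ := hx
  exact ⟨fun b n => q (g b) n, fun b => E (g b), by fun_prop, by fun_prop, fun _ _ => h _ _⟩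

theorem add {x y : α → ℝ} (hx : UniformlyComputable x) (hy : UniformlyComputable y) :
    UniformlyComputable fun a => x a + y a := by
  obtain ⟨q, E, hq, hE, h⟩ := hx
  obtain ⟨q', E', hq', hE', h'⟩ := hy
  refine ⟨fun a n => q a n + q' a n, fun a => E a + E' a, by fun_prop, by fun_prop, fun a n => ?_⟩
  push_cast
  rw [add_mul, add_sub_add_comm]
  exact (abs_add_le _ _).trans (add_le_add (h a n) (h' a n))

theorem natCast_mul {x : α → ℝ} (hx : UniformlyComputable x) {k : α → ℕ} (hk : Computable k) :
    UniformlyComputable fun a => k a * x a := by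
  obtain ⟨q, E, hq, hE, h⟩ := hx
  refine ⟨fun a n => k a * q a n, fun a => k a * E a, by fun_prop, by fun_prop, fun a n => ?_⟩
  push_cast
  rw [mul_assoc, ← mul_sub, abs_mul, Nat.abs_cast]
  exact mul_le_mul_of_nonneg_left (h a n) (Nat.cast_nonneg _)

theorem ite_zero {x : α → ℝ} (hx : UniformlyComputable x) {p : α → Prop} [DecidablePred p]
    (hp : Computable fun a => decide (p a)) :
    UniformlyComputable fun a => if p a then x a else 0 := by
  obtain ⟨q, E, hq, hE, h⟩ := hx
  have hp' : Computable fun y : α × ℕ => decide (p y.1) := hp.comp Computable.fst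
  refine ⟨fun a n => if p a then q a n else 0, E, by fun_prop, hE, fun a n => ?_⟩
  by_cases ha : p a
  · simpa [ha] using h a n
  · simp [ha]

theorem sum_range {x : α → ℕ → ℝ} (hx : UniformlyComputable fun y : α × ℕ => x y.1 y.2) {k : α → ℕ}
    (hk : Computable k) : UniformlyComputable fun a => ∑ i ∈ Finset.range (k a), x a i := by
  obtain ⟨q, E, hq, hE, h⟩ := hx
  refine ⟨fun a n => ∑ i ∈ Finset.range (k a), q (a, i) n,
    fun a => ∑ i ∈ Finset.range (k a), E (a, i), by fun_prop, by fun_prop, fun a n => ?_⟩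
  push_cast
  rw [Finset.sum_mul, ← Finset.sum_sub_distrib]
  exact (Finset.abs_sum_le_sum_abs _ _).trans (Finset.sum_le_sum fun i _ => h (a, i) n)

theorem nonneg {x : α → ℝ} (hx : UniformlyComputable x) (a : α) : 0 ≤ x a := by
  obtain ⟨q, E, -, -, h⟩ := hx
  by_contra! hneg
  obtain ⟨n, hn⟩ := pow_unbounded_of_one_lt (E a / -x a) one_lt_two
  rw [div_lt_iff₀ (neg_pos.2 hneg)] at hn
  linarith [(abs_le.1 (h a n)).1, (q a n).cast_nonneg (α := ℝ)]

theorem exists_error_two {x : α → ℝ} (hx : UniformlyComputable x) :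
    ∃ q : α → ℕ → ℕ, (Computable fun y : α × ℕ => q y.1 y.2) ∧
      ∀ a n, |x a * 2 ^ n - q a n| ≤ 2 := by
  obtain ⟨q, E, hq, hE, h⟩ := hx
  refine ⟨fun a n => q a (n + E a) / 2 ^ E a, by fun_prop, fun a n => ?_⟩
  have hfloor := abs_div_sub_natDiv_le_one (q a (n + E a)) (2 ^ E a)
  have hscaled : |x a * 2 ^ n - q a (n + E a) / 2 ^ E a| ≤ 1 := by
    refine le_of_mul_le_mul_right ?_ (by positivity : (0 : ℝ) < 2 ^ E a)
    rw [abs_sub_div_mul_two_pow, mul_assoc, ← pow_add, one_mul]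
    exact (h a (n + E a)).trans (by exact_mod_cast Nat.lt_two_pow_self.le)
  push_cast at hfloor
  linarith [abs_sub_le (x a * 2 ^ n) (q a (n + E a) / 2 ^ E a : ℝ) (q a (n + E a) / 2 ^ E a : ℕ)]

theorem exists_computable_bound {x : α → ℝ} (hx : UniformlyComputable x) :
    ∃ B : α → ℕ, Computable B ∧ ∀ a, |x a| ≤ B a := by
  obtain ⟨q, E, hq, hE, h⟩ := hx
  refine ⟨fun a => q a 0 + E a, by fun_prop, fun a => ?_⟩
  have := abs_sub_abs_le_abs_sub (x a) (q a 0)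
  have := h a 0
  push_cast
  simp only [pow_zero, mul_one, Nat.abs_cast] at *
  linarith

theorem mul {x y : α → ℝ} (hx : UniformlyComputable x) (hy : UniformlyComputable y) :
    UniformlyComputable fun a => x a * y a := by
  obtain ⟨B, hB, hxB⟩ := hx.exists_computable_bound
  obtain ⟨B', hB', hyB⟩ := hy.exists_computable_bound
  obtain ⟨q, E, hq, hE, h⟩ := hx
  obtain ⟨q', E', hq', hE', h'⟩ := hy
  refine of_ratio (k := fun a n => q a n * q' a n) (d := fun _ n => 2 ^ n * 2 ^ n)
    (E := fun a => B a * E' a + E a * (B' a + E' a)) (by fun_prop) (by fun_prop) (by fun_prop)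
    fun a n => ?_
  have hx' := (abs_sub_div_mul_two_pow (x a) (q a n) n).trans_le (h a n)
  have hy' := (abs_sub_div_mul_two_pow (y a) (q' a n) n).trans_le (h' a n)
  have hq'_le : (q' a n : ℝ) / 2 ^ n ≤ B' a + E' a := by
    have hsub : |y a - q' a n / 2 ^ n| ≤ E' a :=
      (le_mul_of_one_le_right (abs_nonneg _) (one_le_pow₀ one_le_two)).trans hy'
    linarith [le_abs_self (y a), hyB a, (abs_le.1 hsub).1]
  have hsplit : x a * y a - (q a n * q' a n : ℕ) / (2 ^ n * 2 ^ n : ℕ) =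
      x a * (y a - q' a n / 2 ^ n) + (x a - q a n / 2 ^ n) * (q' a n / 2 ^ n) := by
    push_cast
    rw [mul_div_mul_comm]
    ring
  calc |x a * y a - (q a n * q' a n : ℕ) / (2 ^ n * 2 ^ n : ℕ)| * 2 ^ n
      ≤ (|x a * (y a - q' a n / 2 ^ n)| + |(x a - q a n / 2 ^ n) * (q' a n / 2 ^ n)|) * 2 ^ n := by
        rw [hsplit]; gcongr; exact abs_add_le _ _
    _ = |x a| * (|y a - q' a n / 2 ^ n| * 2 ^ n) +
          |x a - q a n / 2 ^ n| * 2 ^ n * (q' a n / 2 ^ n) := by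
        rw [abs_mul, abs_mul, abs_of_nonneg (by positivity : (0 : ℝ) ≤ q' a n / 2 ^ n)]
        ring
    _ ≤ B a * E' a + E a * (B' a + E' a) := by gcongr; exact hxB a
    _ = _ := by push_cast; ring

theorem exists_approx_ge_two_pow {y : α → ℝ} (hy : UniformlyComputable y) (hy_one : ∀ a, 1 ≤ y a) :
    ∃ (q : α → ℕ → ℕ) (E : α → ℕ), (Computable fun y : α × ℕ => q y.1 y.2) ∧ Computable E ∧
      (∀ a n, 2 ^ n ≤ q a n) ∧ ∀ a n, |y a - q a n / 2 ^ n| * 2 ^ n ≤ E a := by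
  obtain ⟨q, E, hq, hE, h⟩ := hy
  refine ⟨fun a n => max (q a n) (2 ^ n), E, by fun_prop, hE, fun a n => le_max_right _ _,
    fun a n => ?_⟩
  rw [abs_sub_div_mul_two_pow]
  push_cast
  exact (abs_sub_max_le (le_mul_of_one_le_left (by positivity) (hy_one a))).trans (h a n)

theorem div {x y : α → ℝ} (hx : UniformlyComputable x) (hy : UniformlyComputable y)
    (hy_one : ∀ a, 1 ≤ y a) : UniformlyComputable fun a => x a / y a := by
  obtain ⟨B, hB, hxB⟩ := hx.exists_computable_bound
  obtain ⟨q, E, hq, hE, h⟩ := hx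
  obtain ⟨q', E', hq', hE', hq'_ge, h'⟩ := hy.exists_approx_ge_two_pow hy_one
  refine of_ratio (k := q) (d := q') (E := fun a => E a + B a * E' a) hq hq' (by fun_prop)
    fun a n => ?_
  have hx' := (abs_sub_div_mul_two_pow (x a) (q a n) n).trans_le (h a n)
  have hb_one : (1 : ℝ) ≤ q' a n / 2 ^ n :=
    (one_le_div (by positivity)).2 (by exact_mod_cast hq'_ge a n)
  have hb_pos : (0 : ℝ) < q' a n / 2 ^ n := by linarith
  have hy_pos : 0 < y a := by linarith [hy_one a]
  have hsplit : x a / y a - q a n / q' a n =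
      (x a - q a n / 2 ^ n) / (q' a n / 2 ^ n) -
        x a * (y a - q' a n / 2 ^ n) / (y a * (q' a n / 2 ^ n)) := by
    have : (0 : ℝ) < q' a n := by exact_mod_cast (Nat.two_pow_pos n).trans_le (hq'_ge a n)
    field_simp
    ring
  calc |x a / y a - q a n / q' a n| * 2 ^ n
      ≤ (|x a - q a n / 2 ^ n| / (q' a n / 2 ^ n) +
          |x a| * |y a - q' a n / 2 ^ n| / (y a * (q' a n / 2 ^ n))) * 2 ^ n := by
        rw [hsplit]
        gcongr
        refine (abs_sub _ _).trans_eq ?_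
        rw [abs_div _ (_ / _), abs_of_pos hb_pos, abs_div, abs_mul,
          abs_of_pos (mul_pos hy_pos hb_pos)]
    _ ≤ (|x a - q a n / 2 ^ n| + |x a| * |y a - q' a n / 2 ^ n|) * 2 ^ n := by
        gcongr
        · exact div_le_self (abs_nonneg _) hb_one
        · exact div_le_self (by positivity) (one_le_mul_of_one_le_of_one_le (hy_one a) hb_one)
    _ = |x a - q a n / 2 ^ n| * 2 ^ n + |x a| * (|y a - q' a n / 2 ^ n| * 2 ^ n) := by ring
    _ ≤ E a + B a * E' a := by gcongr; exacts [hxB a, h' a n]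
    _ = _ := by push_cast; ring

theorem logb {y : α → ℝ} (hy : UniformlyComputable y) (hy_one : ∀ a, 1 ≤ y a) :
    UniformlyComputable fun a => Real.logb 2 (y a) := by
  obtain ⟨q, E, hq, hE, hq_ge, h⟩ := hy.exists_approx_ge_two_pow hy_one
  have hq_pos : ∀ y : α × ℕ, 0 < q y.1 y.2 := fun y => (Nat.two_pow_pos _).trans_le (hq_ge _ _)
  obtain ⟨u, hu, hu_spec⟩ := exists_computable_of_forall_exists
    (p := fun (y : α × ℕ) u => 2 ^ u ≤ q y.1 y.2 ^ 2 ^ y.2 ∧ q y.1 y.2 ^ 2 ^ y.2 < 2 ^ (u + 1))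
    (by fun_prop) fun y => exists_natLog_approx (hq_pos y) _
  refine ⟨fun a n => u (a, n) - n * 2 ^ n, fun a => 2 * E a + 1, by fun_prop, by fun_prop,
    fun a n => ?_⟩
  have hq_pos' : (0 : ℝ) < q a n := by exact_mod_cast hq_pos (a, n)
  have hu_err : |2 ^ n * Real.logb 2 (q a n) - u (a, n)| ≤ 1 := by
    simpa using
      abs_natCast_mul_logb_sub_le_one (hq_pos (a, n)) (hu_spec (a, n)).1 (hu_spec (a, n)).2
  have hu_ge : n * 2 ^ n ≤ u (a, n) := by
    have hpow : 2 ^ (n * 2 ^ n) < 2 ^ (u (a, n) + 1) := by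
      rw [pow_mul]
      exact (Nat.pow_le_pow_left (hq_ge a n) _).trans_lt (hu_spec (a, n)).2
    exact Nat.lt_succ_iff.1 ((Nat.pow_lt_pow_iff_right one_lt_two).1 hpow)
  have hlip := abs_logb_two_sub_logb_two_le (hy_one a)
    ((one_le_div (by positivity)).2 (by exact_mod_cast hq_ge a n) : (1 : ℝ) ≤ q a n / 2 ^ n)
  have hlog : Real.logb 2 (q a n / 2 ^ n) = Real.logb 2 (q a n) - n := by
    rw [Real.logb_div hq_pos'.ne' (by positivity), Real.logb_pow, Real.logb_self_eq_one one_lt_two,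
      mul_one]
  push_cast [Nat.cast_sub hu_ge]
  calc |Real.logb 2 (y a) * 2 ^ n - (u (a, n) - n * 2 ^ n)|
      = |(Real.logb 2 (y a) - Real.logb 2 (q a n / 2 ^ n)) * 2 ^ n +
          (2 ^ n * Real.logb 2 (q a n) - u (a, n))| := by rw [hlog]; ring_nf
    _ ≤ |Real.logb 2 (y a) - Real.logb 2 (q a n / 2 ^ n)| * 2 ^ n +
          |2 ^ n * Real.logb 2 (q a n) - u (a, n)| := by
        refine (abs_add_le _ _).trans_eq ?_
        rw [abs_mul, abs_of_pos (by positivity : (0 : ℝ) < 2 ^ n)]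
    _ ≤ 2 * |y a - q a n / 2 ^ n| * 2 ^ n + 1 := by gcongr
    _ ≤ 2 * E a + 1 := by linarith [h a n]

theorem two_rpow_neg {x : α → ℝ} (hx : UniformlyComputable x) (hx_nonneg : ∀ a, 0 ≤ x a) :
    UniformlyComputable fun a => (2 : ℝ) ^ (-x a) := by
  obtain ⟨q, E, hq, hE, h⟩ := hx
  obtain ⟨u, hu, hu_spec⟩ := exists_computable_of_forall_exists
    (p := fun (y : α × ℕ) u => u ^ 2 ^ y.2 * 2 ^ q y.1 y.2 ≤ 2 ^ (y.2 * 2 ^ y.2) ∧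
      2 ^ (y.2 * 2 ^ y.2) < (u + 1) ^ 2 ^ y.2 * 2 ^ q y.1 y.2)
    (by fun_prop)
    fun y => exists_mul_pow_le_lt (Nat.two_pow_pos _) (Nat.two_pow_pos _).ne' _
  refine ⟨fun a n => u (a, n), fun a => E a + 1, by fun_prop, by fun_prop, fun a n => ?_⟩
  have hu_err := abs_rpow_neg_mul_two_pow_sub_le_one (hu_spec (a, n)).1 (hu_spec (a, n)).2
  have hlip := abs_two_rpow_neg_sub_le (hx_nonneg a) (by positivity : (0 : ℝ) ≤ q a n / 2 ^ n)
  have hx_err := (abs_sub_div_mul_two_pow (x a) (q a n) n).trans_le (h a n)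
  push_cast
  calc |(2 : ℝ) ^ (-x a) * 2 ^ n - u (a, n)|
      ≤ |(2 : ℝ) ^ (-x a) * 2 ^ n - 2 ^ (-(q a n / 2 ^ n : ℝ)) * 2 ^ n| +
          |(2 : ℝ) ^ (-(q a n / 2 ^ n : ℝ)) * 2 ^ n - u (a, n)| := abs_sub_le _ _ _
    _ = |(2 : ℝ) ^ (-x a) - 2 ^ (-(q a n / 2 ^ n : ℝ))| * 2 ^ n +
          |(2 : ℝ) ^ (-(q a n / 2 ^ n : ℝ)) * 2 ^ n - u (a, n)| := by
        rw [← sub_mul, abs_mul, abs_of_pos (by positivity : (0 : ℝ) < 2 ^ n)]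
    _ ≤ |x a - q a n / 2 ^ n| * 2 ^ n + 1 := by gcongr
    _ ≤ E a + 1 := by gcongr

end UniformlyComputable

theorem ComputableReal.uniformlyComputable {T : ℝ} (hT : ComputableReal T) (hT_nonneg : 0 ≤ T) :
    UniformlyComputable fun _ : α => T := by
  obtain ⟨f, hf, hf_err⟩ := hT
  refine UniformlyComputable.of_ratio (k := fun _ n => (f (2 ^ n)).num.toNat)
    (d := fun _ n => (f (2 ^ n)).den) (E := fun _ => 1) (by fun_prop) (by fun_prop) (by fun_prop)
    fun _ n => ?_
  have hcast : ((f (2 ^ n)).num.toNat : ℝ) / (f (2 ^ n)).den = max (f (2 ^ n) : ℝ) 0 := by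
    rw [← Int.cast_natCast, Int.ofNat_toNat, Int.cast_max, Int.cast_zero, Rat.cast_def,
      ← zero_div ((f (2 ^ n)).den : ℝ), max_div_div_right (Nat.cast_nonneg _), zero_div]
  have herr := hf_err (2 ^ n) Nat.one_le_two_pow
  push_cast at herr
  rw [hcast, Nat.cast_one, ← le_div_iff₀ (by positivity)]
  exact (abs_sub_max_le hT_nonneg).trans herr.le

theorem ComputableReal.uniformlyComputable_two_rpow {T : ℝ} (hT : ComputableReal T)
    (hT_pos : 0 < T) : UniformlyComputable fun l : ℕ => (2 : ℝ) ^ (-(l : ℝ) / T) := by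
  obtain ⟨K, hK⟩ := exists_nat_ge (1 / T)
  have hKT : 1 ≤ K * T := (div_le_iff₀ hT_pos).1 hK
  have hone : UniformlyComputable fun _ : ℕ => (1 : ℝ) :=
    ⟨fun _ n => 2 ^ n, fun _ => 0, by fun_prop, by fun_prop, fun _ _ => by simp⟩
  have hquot : UniformlyComputable fun l : ℕ => ((l * K : ℕ) : ℝ) * 1 / (K * T) :=
    (hone.natCast_mul (by fun_prop)).div
      ((hT.uniformlyComputable hT_pos.le).natCast_mul (Computable.const K)) fun _ => hKT
  convert hquot.two_rpow_neg fun l => by positivity using 3 with l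
  have hK_ne : (K : ℝ) ≠ 0 := by rintro h; norm_num [h] at hKT
  push_cast
  field_simp

theorem leftComputable_sub_natCast_of_tendsto {F : ℕ → ℝ} {S : ℝ} (hF : UniformlyComputable F)
    (hle : ∀ m, F m ≤ S) (hlim : Tendsto F atTop (nhds S)) (K : ℕ) : LeftComputable (S - K) := by
  obtain ⟨q, hq, h⟩ := hF.exists_error_two
  have hgap : ∀ m, |F m - (q m m - 2) / 2 ^ m| ≤ 4 * (1 / 2) ^ m := fun m => by
    rw [one_div_pow, mul_one_div, le_div_iff₀ (by positivity), abs_sub_div_mul_two_pow, abs_le]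
    constructor <;> linarith [abs_le.1 (h m m)]
  refine ⟨fun m => ((K * 2 ^ m + 2 : ℕ) - (q m m : ℕ)) / 2 ^ m,
    computable_rat_of_mul_eq_sub (x := fun m => K * 2 ^ m + 2) (y := fun m => q m m)
      (d := fun m => 2 ^ m) (by fun_prop) (by fun_prop) (by fun_prop) (fun m => Nat.two_pow_pos m)
      fun m => by push_cast; exact div_mul_cancel₀ _ (by positivity), fun m => ?_, ?_⟩
  · push_cast
    rw [le_div_iff₀ (by positivity)]
    have := mul_le_mul_of_nonneg_right (hle m) (by positivity : (0 : ℝ) ≤ 2 ^ m)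
    linarith [(abs_le.1 (h m m)).1]
  · have hgeom : Tendsto (fun m : ℕ => 4 * (1 / 2 : ℝ) ^ m) atTop (nhds 0) := by
      simpa only [mul_zero] using
        (tendsto_pow_atTop_nhds_zero_of_lt_one one_half_pos.le one_half_lt_one).const_mul (4 : ℝ)
    have hzero : Tendsto (fun m => F m - (q m m - 2) / 2 ^ m) atTop (nhds 0) :=
      squeeze_zero_norm hgap hgeom
    convert (hzero.sub hlim).add_const (K : ℝ) using 2 with m
    · push_cast
      field_simp
      ring
    · ring

/-! ### Stages of a computer -/

namespace Computer

open Nat.Partrec (Code)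

theorem exists_code (U : Computer) :
    ∃ c : Code, ∀ p, c.eval (Encodable.encode p) = (U.f p).map Encodable.encode := by
  obtain ⟨c, hc⟩ := Code.exists_code.1 U.partrec
  exact ⟨c, fun p => by simp [hc, Encodable.encodek]⟩

/-- A code of `U` acting on the encodings of binary strings. -/
noncomputable def code (U : Computer) : Code := U.exists_code.choose

theorem code_eval (U : Computer) (p : List Bool) :
    U.code.eval (Encodable.encode p) = (U.f p).map Encodable.encode :=
  U.exists_code.choose_spec p

/-- The finite set of programs on which the code of `U` halts within `m` steps of evaluation. These
sets exhaust the domain of `U`, so sums over them approximate the partition function and the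
energy. -/
noncomputable def stage (U : Computer) (m : ℕ) : Finset (List Bool) :=
  ((Finset.range m).filter fun i => (U.code.evaln m i).isSome).preimage Encodable.encode
    Encodable.encode_injective.injOn

theorem mem_stage {U : Computer} {m : ℕ} {p : List Bool} :
    p ∈ U.stage m ↔ ∃ y, y ∈ U.code.evaln m (Encodable.encode p) := by
  simp only [stage, Finset.mem_preimage, Finset.mem_filter, Finset.mem_range,
    Option.isSome_iff_exists, ← Option.mem_def]
  exact and_iff_right_of_imp fun ⟨_, hy⟩ => Code.evaln_bound hy

theorem encode_mem_evaln {U : Computer} {m : ℕ} {p : List Bool} (hp : p ∈ U.stage m)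
    {s : List Bool} (hs : s ∈ U.f p) :
    Encodable.encode s ∈ U.code.evaln m (Encodable.encode p) := by
  obtain ⟨y, hy⟩ := mem_stage.1 hp
  have hy_eval := Code.evaln_sound hy
  rw [code_eval] at hy_eval
  rwa [Part.mem_unique (Part.mem_map Encodable.encode hs) hy_eval]

theorem stage_mono (U : Computer) : Monotone U.stage := fun _ _ hmm' _ hp =>
  let ⟨y, hy⟩ := mem_stage.1 hp
  mem_stage.2 ⟨y, Code.evaln_mono hmm' hy⟩

theorem mem_domain_iff_exists_mem_stage {U : Computer} {p : List Bool} :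
    p ∈ U.domain ↔ ∃ m, p ∈ U.stage m := by
  calc p ∈ U.domain ↔ ∃ s, s ∈ U.f p := Part.dom_iff_mem
    _ ↔ ∃ y, y ∈ U.code.eval (Encodable.encode p) := by
      rw [code_eval, ← Part.dom_iff_mem, ← Part.dom_iff_mem]
      rfl
    _ ↔ ∃ (m : ℕ) (y : ℕ), y ∈ U.code.evaln m (Encodable.encode p) :=
      Iff.trans (exists_congr fun _ => Code.evaln_complete) exists_comm
    _ ↔ ∃ m, p ∈ U.stage m := exists_congr fun _ => mem_stage.symm

theorem stage_subset_domain (U : Computer) (m : ℕ) : (U.stage m : Set (List Bool)) ⊆ U.domain :=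
  fun _ hp => mem_domain_iff_exists_mem_stage.2 ⟨m, hp⟩

theorem exists_subset_stage {U : Computer} {A : Set (List Bool)} (hA : A.Finite)
    (hAU : A ⊆ U.domain) : ∃ m, A ⊆ U.stage m := by
  choose! m hm using fun p (hp : p ∈ A) => mem_domain_iff_exists_mem_stage.1 (hAU hp)
  obtain ⟨M, hM⟩ := (hA.image m).bddAbove
  exact ⟨M, fun p hp => U.stage_mono (hM ⟨p, hp, rfl⟩) (hm p hp)⟩

theorem mem_range_encode_iff_isSome_decode₂ {i : ℕ} :
    i ∈ Set.range (Encodable.encode : List Bool → ℕ) ↔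
      (Encodable.decode₂ (List Bool) i).isSome := by
  simp [Option.isSome_iff_exists, Encodable.decode₂_eq_some]

theorem sum_stage (U : Computer) (x : List Bool → ℝ) (m : ℕ) :
    ∑ p ∈ U.stage m, x p = ∑ i ∈ Finset.range m,
      if (U.code.evaln m i).isSome ∧ (Encodable.decode₂ (List Bool) i).isSome then
        x ((Encodable.decode₂ (List Bool) i).getD []) else 0 := by
  classical
  have hsum := Finset.sum_preimage' (Encodable.encode : List Bool → ℕ)
    ((Finset.range m).filter fun i => (U.code.evaln m i).isSome) Encodable.encode_injective.injOn
    fun i => x ((Encodable.decode₂ (List Bool) i).getD [])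
  simp only [Encodable.decode₂_encode, Option.getD_some, Finset.filter_filter,
    mem_range_encode_iff_isSome_decode₂] at hsum
  rw [stage, hsum, Finset.sum_filter]

theorem computable_evaln (U : Computer) : Computable fun y : ℕ × ℕ => U.code.evaln y.1 y.2 :=
  (Code.primrec_evaln.comp (Primrec.pair (Primrec.pair Primrec.fst (Primrec.const U.code))
    Primrec.snd)).to_comp

theorem uniformlyComputable_sum_stage (U : Computer) {x : List Bool → ℝ}
    (hx : UniformlyComputable x) : UniformlyComputable fun m => ∑ p ∈ U.stage m, x p := by
  simp only [sum_stage]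
  have hdecode : Computable fun y : ℕ × ℕ => Encodable.decode₂ (List Bool) y.2 :=
    Primrec.decode₂.to_comp.comp Computable.snd
  have hhalt : Computable fun y : ℕ × ℕ => decide ((U.code.evaln y.1 y.2).isSome = true) :=
    (Primrec.option_isSome.to_comp.comp U.computable_evaln).of_eq fun _ => by simp
  have hdecodable : Computable fun y : ℕ × ℕ =>
      decide ((Encodable.decode₂ (List Bool) y.2).isSome = true) :=
    (Primrec.option_isSome.to_comp.comp hdecode).of_eq fun _ => by simp
  exact ((hx.comp (hdecode.option_getD (Computable.const []))).ite_zero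
    (computable_decide_and hhalt hdecodable)).sum_range Computable.id

theorem exists_computable_output_length_lt (U : Computer) :
    ∃ V : ℕ → ℕ, Computable V ∧ ∀ m, ∀ p ∈ U.stage m, ∀ s ∈ U.f p, s.length < V m := by
  have hlength : Computable fun y : ℕ × ℕ =>
      (((U.code.evaln y.1 y.2).bind (Encodable.decode (α := List Bool))).getD []).length :=
    Computable.list_length.comp ((U.computable_evaln.option_bind
      (Computable.decode.comp Computable.snd).to₂).option_getD (Computable.const []))
  refine ⟨fun m => ∑ i ∈ Finset.range m,
    (((U.code.evaln m i).bind (Encodable.decode (α := List Bool))).getD []).length + 1,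
    by fun_prop, fun m p hp s hs => ?_⟩
  have hy := encode_mem_evaln hp hs
  rw [Nat.lt_succ_iff]
  refine le_trans (le_of_eq ?_) (Finset.single_le_sum (fun _ _ => Nat.zero_le _)
    (Finset.mem_range.2 (Code.evaln_bound hy)))
  rw [Option.mem_def.1 hy, Option.bind_some, Encodable.encodek, Option.getD_some]

theorem tendsto_sum_stage (U : Computer) {x : List Bool → ℝ}
    (hx : Summable fun p : U.domain => x p) :
    Tendsto (fun m => ∑ p ∈ U.stage m, x p) atTop (nhds (∑' p : U.domain, x p)) := by
  classical
  have hmono : Monotone fun m => (U.stage m).subtype (· ∈ U.domain) := fun m m' hmm' p hp =>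
    Finset.mem_subtype.2 (U.stage_mono hmm' (Finset.mem_subtype.1 hp))
  have hcover : ∀ p : U.domain, ∃ m, p ∈ (U.stage m).subtype (· ∈ U.domain) := fun p =>
    (mem_domain_iff_exists_mem_stage.1 p.2).imp fun _ => Finset.mem_subtype.2
  refine (hx.hasSum.comp (tendsto_atTop_finset_of_monotone hmono hcover)).congr fun m => ?_
  exact Finset.sum_subtype_of_mem x fun p hp => U.stage_subset_domain m hp

end Computer

/-! ### Boltzmann weights -/

theorem PrefixFree.uniquelyDecodable {S : Set (List Bool)} (hS : PrefixFree S) (hnil : [] ∉ S) :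
    InformationTheory.UniquelyDecodable S := by
  have eq_nil_of_flatten_eq_nil : ∀ L : List (List Bool), (∀ w ∈ L, w ∈ S) → L.flatten = [] →
      L = [] := fun L hL hflat =>
    List.eq_nil_iff_forall_not_mem.2 fun w hw =>
      hnil (List.flatten_eq_nil_iff.1 hflat w hw ▸ hL w hw)
  intro L₁
  induction L₁ with
  | nil => exact fun L₂ _ h₂ h => (eq_nil_of_flatten_eq_nil L₂ h₂ h.symm).symm
  | cons v L₁ ih =>
    intro L₂ h₁ h₂ h
    cases L₂ with
    | nil => exact eq_nil_of_flatten_eq_nil _ h₁ h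
    | cons w L₂ =>
      obtain ⟨hv, hL₁⟩ := List.forall_mem_cons.1 h₁
      obtain ⟨hw, hL₂⟩ := List.forall_mem_cons.1 h₂
      rw [List.flatten_cons, List.flatten_cons] at h
      obtain rfl : v = w :=
        (List.prefix_or_prefix_of_prefix ⟨_, h⟩ ⟨_, rfl⟩).elim (hS v hv w hw)
          fun hwv => (hS w hw v hv hwv).symm
      rw [ih L₂ hL₁ hL₂ (List.append_cancel_left h)]

/-- The Boltzmann weight `2 ^ (-|p| / T)` of the program `p` at temperature `T`; the partition
function is the sum of these weights over the domain. Kraft's inequality is the statement that this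
sum is at most `1` at temperature `1`. -/
noncomputable def boltzmann (T : ℝ) (p : List Bool) : ℝ := 2 ^ (-(p.length : ℝ) / T)

theorem boltzmann_pos (T : ℝ) (p : List Bool) : 0 < boltzmann T p := Real.rpow_pos_of_pos two_pos _

theorem length_mul_boltzmann_nonneg (T : ℝ) (p : List Bool) : 0 ≤ p.length * boltzmann T p :=
  mul_nonneg (Nat.cast_nonneg _) (boltzmann_pos T p).le

theorem length_add_one_mul_boltzmann_nonneg (T : ℝ) (p : List Bool) :
    0 ≤ (p.length + 1) * boltzmann T p :=
  mul_nonneg (by positivity) (boltzmann_pos T p).le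

theorem sum_boltzmann_nonneg (T : ℝ) (A : Finset (List Bool)) : 0 ≤ ∑ p ∈ A, boltzmann T p :=
  Finset.sum_nonneg fun p _ => (boltzmann_pos T p).le

theorem sum_length_mul_boltzmann_nonneg (T : ℝ) (A : Finset (List Bool)) :
    0 ≤ ∑ p ∈ A, p.length * boltzmann T p :=
  Finset.sum_nonneg fun p _ => length_mul_boltzmann_nonneg T p

theorem boltzmann_one (p : List Bool) : boltzmann 1 p = (1 / 2) ^ p.length := by
  rw [boltzmann, div_one, Real.rpow_neg two_pos.le, Real.rpow_natCast, one_div_pow, one_div]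

theorem boltzmann_eq_rpow (T : ℝ) (p : List Bool) : boltzmann T p = boltzmann 1 p ^ (1 / T) := by
  rw [boltzmann, boltzmann, ← Real.rpow_mul two_pos.le, div_one, mul_one_div]

theorem PrefixFree.sum_boltzmann_one_le_one {A : Finset (List Bool)}
    (hA : PrefixFree (A : Set (List Bool))) : ∑ p ∈ A, boltzmann 1 p ≤ 1 := by
  simp only [boltzmann_one]
  by_cases hnil : [] ∈ A
  · obtain rfl : A = {[]} := Finset.eq_singleton_iff_unique_mem.2
      ⟨hnil, fun p hp => (hA [] hnil p hp List.nil_prefix).symm⟩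
    simp
  · simpa using InformationTheory.kraft_mcmillan_inequality (hA.uniquelyDecodable hnil)

theorem PrefixFree.subset {S S' : Set (List Bool)} (hS : PrefixFree S) (hS' : S' ⊆ S) :
    PrefixFree S' :=
  fun p hp q hq => hS p (hS' hp) q (hS' hq)

theorem sum_rpow_le_rpow_sum {ι : Type*} (s : Finset ι) {x : ι → ℝ} (hx : ∀ i ∈ s, 0 ≤ x i) {r : ℝ}
    (hr : 1 ≤ r) : ∑ i ∈ s, x i ^ r ≤ (∑ i ∈ s, x i) ^ r := by
  have rpow_eq : ∀ y : ℝ, 0 ≤ y → y ^ r = y * y ^ (r - 1) := fun y hy => by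
    rw [← Real.rpow_one_add' hy (by linarith), add_sub_cancel]
  rw [rpow_eq _ (Finset.sum_nonneg hx), Finset.sum_mul]
  refine Finset.sum_le_sum fun i hi => ?_
  rw [rpow_eq _ (hx i hi)]
  exact mul_le_mul_of_nonneg_left
    (Real.rpow_le_rpow (hx i hi) (Finset.single_le_sum hx hi) (by linarith)) (hx i hi)

theorem sum_boltzmann_le_rpow {T : ℝ} (hT_pos : 0 < T) (hT_le : T ≤ 1) (A : Finset (List Bool)) :
    ∑ p ∈ A, boltzmann T p ≤ (∑ p ∈ A, boltzmann 1 p) ^ (1 / T) := by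
  simp only [boltzmann_eq_rpow T]
  exact sum_rpow_le_rpow_sum A (fun p _ => (boltzmann_pos 1 p).le) ((one_le_div hT_pos).2 hT_le)

theorem exists_length_add_one_mul_boltzmann_le {T T' : ℝ} (hT : 0 < T) (hTT' : T < T') :
    ∃ C > 0, ∀ p, (p.length + 1) * boltzmann T p ≤ C * boltzmann T' p := by
  set δ := min 1 ((1 / T - 1 / T') * Real.log 2)
  have hδ_pos : 0 < δ := lt_min one_pos
    (mul_pos (sub_pos.2 (one_div_lt_one_div_of_lt hT hTT')) (Real.log_pos one_lt_two))
  refine ⟨1 / δ, one_div_pos.2 hδ_pos, fun p => ?_⟩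
  have hsplit : boltzmann T' p = boltzmann T p * 2 ^ (p.length * (1 / T - 1 / T')) := by
    rw [boltzmann, boltzmann, ← Real.rpow_add two_pos]
    ring_nf
  have hexp : (p.length + 1) * δ ≤ (2 : ℝ) ^ (p.length * (1 / T - 1 / T')) := by
    calc (p.length + 1) * δ ≤ p.length * ((1 / T - 1 / T') * Real.log 2) + 1 := by
          rw [add_mul, one_mul]
          gcongr
          exacts [min_le_right _ _, min_le_left _ _]
      _ = Real.log 2 * (p.length * (1 / T - 1 / T')) + 1 := by ring
      _ ≤ 2 ^ (p.length * (1 / T - 1 / T')) := by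
          rw [Real.rpow_def_of_pos two_pos]
          exact Real.add_one_le_exp _
  rw [hsplit, one_div_mul_eq_div, le_div_iff₀ hδ_pos, mul_right_comm, mul_comm]
  exact mul_le_mul_of_nonneg_left hexp (boltzmann_pos T p).le

theorem Computer.summable_length_add_one_mul_boltzmann (U : Computer) {T : ℝ} (hT_pos : 0 < T)
    (hT_lt : T < 1) :
    Summable fun p : U.domain => ((p : List Bool).length + 1) * boltzmann T p := by
  obtain ⟨C, -, hC⟩ := exists_length_add_one_mul_boltzmann_le hT_pos hT_lt
  have hkraft : Summable fun p : U.domain => boltzmann 1 p :=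
    summable_of_sum_le (c := 1) (fun p => (boltzmann_pos 1 p).le) fun A => by
      refine (Finset.sum_map A (Function.Embedding.subtype _) (boltzmann 1)).symm.trans_le ?_
      refine (U.prefixFree.subset fun p hp => ?_).sum_boltzmann_one_le_one
      obtain ⟨q, -, rfl⟩ := Finset.mem_map.1 hp
      exact q.2
  exact .of_nonneg_of_le (fun p => mul_nonneg (by positivity) (boltzmann_pos T p).le)
    (fun p => hC p) (hkraft.mul_left C)

theorem Computer.summable_boltzmann (U : Computer) {T : ℝ} (hT_pos : 0 < T) (hT_lt : T < 1) :
    Summable fun p : U.domain => boltzmann T p :=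
  .of_nonneg_of_le (fun p => (boltzmann_pos T p).le)
    (fun p => le_mul_of_one_le_left (boltzmann_pos T p).le (by simp))
    (U.summable_length_add_one_mul_boltzmann hT_pos hT_lt)

theorem Computer.summable_length_mul_boltzmann (U : Computer) {T : ℝ} (hT_pos : 0 < T)
    (hT_lt : T < 1) : Summable fun p : U.domain => ((p : List Bool).length : ℝ) * boltzmann T p :=
  .of_nonneg_of_le (fun p => mul_nonneg (by positivity) (boltzmann_pos T p).le)
    (fun p => mul_le_mul_of_nonneg_right (by simp) (boltzmann_pos T p).le)
    (U.summable_length_add_one_mul_boltzmann hT_pos hT_lt)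

/-! ### Binary expansions -/

/-- The natural number with binary expansion `s`, most significant bit first. -/
def binaryValue (s : List Bool) : ℕ := s.foldl (fun v b => 2 * v + b.toNat) 0

/-- The `n` lowest bits of `v`, most significant bit first. -/
def binaryString (n v : ℕ) : List Bool :=
  (List.range n).map fun i => decide (v / 2 ^ (n - 1 - i) % 2 = 1)

theorem binaryValue_concat (s : List Bool) (b : Bool) :
    binaryValue (s ++ [b]) = 2 * binaryValue s + b.toNat := by
  simp [binaryValue]

theorem computable_binaryValue : Computable binaryValue :=
  (Primrec.list_foldl Primrec.id (Primrec.const 0)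
    (Primrec.nat_add.comp (Primrec.nat_mul.comp (Primrec.const 2) (Primrec.fst.comp Primrec.snd))
      ((Primrec.dom_finite Bool.toNat).comp (Primrec.snd.comp Primrec.snd))).to₂).to_comp

@[fun_prop]
theorem computable_map_range {f : α → ℕ → β} {k : α → ℕ}
    (hf : Computable fun y : α × ℕ => f y.1 y.2) (hk : Computable k) :
    Computable fun a => (List.range (k a)).map (f a) := by
  have hconcat : Computable₂ fun (a : α) (y : ℕ × List β) => y.2 ++ [f a y.1] :=
    Computable.list_concat.comp (Computable.snd.comp Computable.snd)
      (hf.comp (Computable.fst.pair (Computable.fst.comp Computable.snd)))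
  refine (Computable.nat_rec hk (Computable.const []) hconcat).of_eq fun a => ?_
  induction k a with
  | zero => rfl
  | succ n ih => simpa [List.range_succ] using ih

@[fun_prop]
theorem computable_binaryString {n v : α → ℕ} (hn : Computable n) (hv : Computable v) :
    Computable fun a => binaryString (n a) (v a) := by
  have hn' : Computable fun y : α × ℕ => n y.1 := hn.comp Computable.fst
  have hv' : Computable fun y : α × ℕ => v y.1 := hv.comp Computable.fst
  unfold binaryString
  fun_prop

theorem length_binaryString (n v : ℕ) : (binaryString n v).length = n := by simp [binaryString]

theorem binaryString_succ (n v : ℕ) :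
    binaryString (n + 1) v = binaryString n (v / 2) ++ [decide (v % 2 = 1)] := by
  have hshift : ∀ i ∈ List.range n, v / 2 ^ (n + 1 - 1 - i) = v / 2 / 2 ^ (n - 1 - i) := by
    intro i hi
    rw [Nat.div_div_eq_div_mul, ← pow_succ', show n - 1 - i + 1 = n + 1 - 1 - i by
      have := List.mem_range.1 hi; omega]
  rw [binaryString, List.range_succ, List.map_append, List.map_singleton]
  congr 1
  · exact List.map_congr_left fun i hi => by rw [hshift i hi]
  · simp

theorem binaryValue_binaryString (n v : ℕ) : binaryValue (binaryString n v) = v % 2 ^ n := by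
  induction n generalizing v with
  | zero => simp [binaryString, binaryValue, Nat.mod_one]
  | succ n ih =>
    have hbit : (decide (v % 2 = 1)).toNat = v % 2 := by
      rcases Nat.mod_two_eq_zero_or_one v with h | h <;> simp [h]
    rw [binaryString_succ, binaryValue_concat, ih, hbit, pow_succ', Nat.mod_mul, add_comm]

theorem floor_mul_two_pow_add_div (x : ℝ) (n k : ℕ) :
    ⌊x * 2 ^ (n + k)⌋₊ / 2 ^ k = ⌊x * 2 ^ n⌋₊ := by
  have hcast : ((2 ^ k : ℕ) : ℝ) = 2 ^ k := by push_cast; rfl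
  rw [← Nat.floor_div_natCast, hcast, pow_add, ← mul_assoc, mul_div_cancel_right₀ _ (by positivity)]

theorem binDigit_succ {x : ℝ} (hx : 0 ≤ x) (n : ℕ) :
    binDigit x (n + 1) = decide (⌊x * 2 ^ (n + 1)⌋₊ % 2 = 1) := by
  have hfloor : x * 2 ^ (n + 1) = Int.fract x * 2 ^ (n + 1) + ((⌊x⌋₊ * 2 ^ n * 2 : ℕ) : ℝ) := by
    have hx_eq := Int.floor_add_fract x
    rw [← Int.natCast_floor_eq_floor hx, Int.cast_natCast] at hx_eq
    nth_rewrite 1 [← hx_eq]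
    push_cast
    ring
  have hfract : (0 : ℝ) ≤ Int.fract x * 2 ^ (n + 1) :=
    mul_nonneg (Int.fract_nonneg x) (by positivity)
  rw [binDigit, ← Int.natCast_floor_eq_floor hfract, hfloor, Nat.floor_add_natCast hfract,
    Nat.add_mul_mod_self_right]
  exact decide_eq_decide.2 (by omega)

theorem bits_eq_binaryString {x : ℝ} (hx : 0 ≤ x) (n : ℕ) :
    bits x n = binaryString n ⌊x * 2 ^ n⌋₊ := by
  refine List.map_congr_left fun i hi => ?_
  have hn : i + 1 + (n - 1 - i) = n := by
    have := List.mem_range.1 hi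
    omega
  rw [binDigit_succ hx, ← floor_mul_two_pow_add_div x (i + 1) (n - 1 - i), hn]

theorem bits_add_natCast (x : ℝ) (K n : ℕ) : bits (x + K) n = bits x n := by
  simp [bits, binDigit]

theorem floor_mul_two_pow_eq {x : ℝ} (hx : 0 ≤ x) (n : ℕ) :
    ⌊x * 2 ^ n⌋₊ = 2 ^ n * ⌊x⌋₊ + binaryValue (bits x n) := by
  have hdiv := floor_mul_two_pow_add_div x 0 n
  rw [zero_add, pow_zero, mul_one] at hdiv
  rw [bits_eq_binaryString hx, binaryValue_binaryString, ← hdiv, Nat.div_add_mod]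

/-! ### Program-size complexity -/

theorem H_le_length {U : Computer} {s p : List Bool} (hp : s ∈ U.f p) : H U s ≤ p.length :=
  Nat.sInf_le ⟨p, rfl, hp⟩

theorem IsOptimal.exists_length_le {U : Computer} (hU : IsOptimal U) (C : Computer) :
    ∃ d, ∀ p s, s ∈ C.f p → ∃ p', s ∈ U.f p' ∧ p'.length ≤ p.length + d := by
  obtain ⟨d, hd⟩ := hU C
  refine ⟨d, fun p s hs => ?_⟩
  obtain ⟨p', hlength, hp'⟩ := hd p (Part.dom_iff_mem.2 ⟨s, hs⟩)
  exact ⟨p', hp' s hs, hlength⟩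

theorem idxOf_false_eq_of_prefix {p q : List Bool} (h : p <+: q) (hp : p.idxOf false < p.length) :
    q.idxOf false = p.idxOf false := by
  obtain ⟨u, rfl⟩ := h
  rw [List.idxOf_append, if_pos (List.idxOf_lt_length_iff.1 hp)]

/-- Decoding a string `w` after the unary code of `a` only if `w` has the prescribed length `ℓ a`
makes the domain prefix-free. -/
theorem exists_computer_unary_prefix {ℓ : ℕ → ℕ} (hℓ : Computable ℓ) {g : ℕ → ℕ →. List Bool}
    (hg : Partrec₂ g) : ∃ C : Computer, ∀ a w, w.length = ℓ a →
      C.f (List.replicate a true ++ false :: w) = g a (binaryValue w) := by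
  have hidx : Computable fun p : List Bool => p.idxOf false :=
    (Primrec.list_idxOf.comp (Primrec.const false) Primrec.id).to_comp
  have hvalue : Computable fun p : List Bool => binaryValue (p.drop (p.idxOf false + 1)) :=
    computable_binaryValue.comp (Primrec.list_drop.to_comp.comp
      (computable_add hidx (Computable.const 1)) Computable.id)
  have hlength : Computable fun p : List Bool =>
      decide (p.length = p.idxOf false + 1 + ℓ (p.idxOf false)) :=
    computable_decide_eq Computable.list_length
      (computable_add (computable_add hidx (Computable.const 1)) (hℓ.comp hidx))
  let f : List Bool →. List Bool := fun p =>
    bif decide (p.length = p.idxOf false + 1 + ℓ (p.idxOf false)) then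
      g (p.idxOf false) (binaryValue (p.drop (p.idxOf false + 1)))
    else Part.none
  have hf_length : ∀ p, (f p).Dom → p.length = p.idxOf false + 1 + ℓ (p.idxOf false) := by
    intro p hp
    by_contra h
    simp [f, h] at hp
  refine ⟨⟨f, Partrec.cond hlength (hg.comp hidx hvalue) Partrec.none, fun p hp q hq hpq => ?_⟩,
    fun a w hw => ?_⟩
  · have hidx_eq : q.idxOf false = p.idxOf false :=
      idxOf_false_eq_of_prefix hpq (by have := hf_length p hp; omega)
    exact hpq.eq_of_length (by rw [hf_length p hp, hf_length q hq, hidx_eq])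
  · have hidx_eq : (List.replicate a true ++ false :: w).idxOf false = a := by
      simp [List.idxOf_append]
    have hdrop : (List.replicate a true ++ false :: w).drop (a + 1) = w := by
      simp [List.drop_append]
    have hlength_eq : (List.replicate a true ++ false :: w).length = a + 1 + ℓ a := by
      rw [List.length_append, List.length_replicate, List.length_cons, hw, add_assoc, add_comm 1]
    simp only [f, hidx_eq, hdrop, hlength_eq, decide_true, cond_true]

theorem IsOptimal.exists_program_of_partrec {U : Computer} (hU : IsOptimal U) {ℓ : ℕ → ℕ}
    (hℓ : Computable ℓ) {g : ℕ → ℕ →. List Bool} (hg : Partrec₂ g) :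
    ∃ d, ∀ a k s, k < 2 ^ ℓ a → s ∈ g a k → ∃ p, s ∈ U.f p ∧ p.length ≤ a + ℓ a + d := by
  obtain ⟨C, hC⟩ := exists_computer_unary_prefix hℓ hg
  obtain ⟨d, hd⟩ := hU.exists_length_le C
  refine ⟨d + 1, fun a k s hk hs => ?_⟩
  obtain ⟨p, hp, hlength⟩ := hd (List.replicate a true ++ false :: binaryString (ℓ a) k) s (by
    rwa [hC _ _ (length_binaryString _ _), binaryValue_binaryString, Nat.mod_eq_of_lt hk])
  refine ⟨p, hp, hlength.trans (le_of_eq ?_)⟩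
  rw [List.length_append, List.length_replicate, List.length_cons, length_binaryString]
  ring

theorem IsOptimal.exists_length_eq_H {U : Computer} (hU : IsOptimal U) (s : List Bool) :
    ∃ p, p.length = H U s ∧ s ∈ U.f p := by
  obtain ⟨d, hd⟩ := hU.exists_program_of_partrec (Computable.const 0)
    (g := fun _ _ => Part.some s) (Computable.const s).partrec
  obtain ⟨p, hp, -⟩ := hd 0 0 s one_pos (Part.mem_some s)
  exact Nat.sInf_mem (s := {n | ∃ p : List Bool, p.length = n ∧ s ∈ U.f p}) ⟨p.length, p, rfl, hp⟩

theorem IsOptimal.exists_H_map_le {U : Computer} (hU : IsOptimal U) {G : List Bool →. List Bool}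
    (hG : Partrec G) : ∃ d, ∀ s, ∀ t ∈ G s, H U t ≤ H U s + d := by
  let C : Computer := ⟨fun p => (U.f p).bind G, U.partrec.bind (hG.comp Computable.snd),
    U.prefixFree.subset fun p hp => hp.1⟩
  obtain ⟨d, hd⟩ := hU.exists_length_le C
  refine ⟨d, fun s t ht => ?_⟩
  obtain ⟨p, hlength, hp⟩ := hU.exists_length_eq_H s
  obtain ⟨p', hp', hlength'⟩ := hd p t (Part.mem_bind hp ht)
  exact (H_le_length hp').trans (hlength'.trans_eq (by rw [hlength]))

/-! ### Complexity of limits of computable sequences -/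

theorem exists_partrec_search {r : α → ℕ → Prop} [∀ a m, Decidable (r a m)]
    (hr : Computable fun y : α × ℕ => decide (r y.1 y.2)) :
    ∃ μ : α →. ℕ, Partrec μ ∧ ∀ a, (∃ m, r a m) → ∃ m ∈ μ a, r a m := by
  refine ⟨fun a => Nat.rfind fun m => Part.some (decide (r a m)), .rfind hr.partrec,
    fun a ⟨m₀, hm₀⟩ => ?_⟩
  have hdom : (Nat.rfind fun m => Part.some (decide (r a m))).Dom :=
    Nat.rfind_dom.2 ⟨m₀, by simpa using hm₀, fun _ => trivial⟩
  obtain ⟨m, hm⟩ := Part.dom_iff_mem.1 hdom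
  exact ⟨m, hm, by simpa using Nat.rfind_spec hm⟩

theorem IsOptimal.exists_H_search_le {U : Computer} (hU : IsOptimal U) {ℓ : ℕ → ℕ}
    (hℓ : Computable ℓ) {r : ℕ × ℕ → ℕ → Prop} [∀ y m, Decidable (r y m)]
    (hr : Computable fun y : (ℕ × ℕ) × ℕ => decide (r y.1 y.2)) {ι : Type*} [Finite ι]
    {f : ι → ℕ × ℕ → ℕ → List Bool}
    (hf : ∀ i, Computable fun y : (ℕ × ℕ) × ℕ => f i y.1 y.2) :
    ∃ d, ∀ a k, k < 2 ^ ℓ a → (∃ m, r (a, k) m) →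
      ∃ m, r (a, k) m ∧ ∀ i, H U (f i (a, k) m) ≤ a + ℓ a + d := by
  cases nonempty_fintype ι
  obtain ⟨μ, hμ, hsearch⟩ := exists_partrec_search hr
  choose d hd using fun i => hU.exists_program_of_partrec hℓ
    (g := fun a k => (μ (a, k)).map (f i (a, k))) (hμ.map (hf i))
  refine ⟨∑ i, d i, fun a k hk hm => ?_⟩
  obtain ⟨m, hmem, hrm⟩ := hsearch (a, k) hm
  refine ⟨m, hrm, fun i => ?_⟩
  obtain ⟨p, hp, hlength⟩ := hd i a k _ hk (Part.mem_map _ hmem)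
  exact (H_le_length hp).trans (hlength.trans (Nat.add_le_add_left
    (Finset.single_le_sum (fun _ _ => Nat.zero_le _) (Finset.mem_univ i)) _))

/-! ### Randomness -/

/-- The first `n` bits of `S` determine a stage at which `F` is within `7 / 2 ^ n` of `S`, hence a
string longer than every output of that stage. -/
theorem IsOptimal.exists_notMem_stage_of_tendsto {U : Computer} (hU : IsOptimal U) {F : ℕ → ℝ}
    (hF : UniformlyComputable F) {S : ℝ} (hS : 0 ≤ S) (hlim : Tendsto F atTop (nhds S)) (m₀ : ℕ) :
    ∃ d, ∀ n, ∃ m, S - F m ≤ 7 / 2 ^ n ∧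
      ∃ p ∈ U.domain, p ∉ U.stage (m + m₀) ∧ p.length ≤ H U (bits S n) + d := by
  obtain ⟨q, hq, hq_error⟩ := hF.exists_error_two
  obtain ⟨V, hV, hV_length⟩ := U.exists_computable_output_length_lt
  let r : List Bool → ℕ → Prop := fun s m =>
    2 ^ s.length * ⌊S⌋₊ + binaryValue s ≤ q m s.length + 4
  have hlength : Computable fun y : List Bool × ℕ => y.1.length :=
    Computable.list_length.comp Computable.fst
  have hvalue : Computable fun y : List Bool × ℕ => binaryValue y.1 :=
    computable_binaryValue.comp Computable.fst
  obtain ⟨μ, hμ, hsearch⟩ := exists_partrec_search (r := r) (computable_decide_le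
      (computable_add (computable_mul (computable_pow (Computable.const 2) hlength)
        (Computable.const ⌊S⌋₊)) hvalue)
      (computable_add (hq.comp (Computable.snd.pair hlength)) (Computable.const 4)))
  have hstring : Computable fun m => binaryString (V (m + m₀)) 0 := by fun_prop
  obtain ⟨d, hd⟩ := hU.exists_H_map_le (hμ.map (hstring.comp Computable.snd).to₂)
  refine ⟨d, fun n => ?_⟩
  have hr_iff : ∀ m, r (bits S n) m ↔ ⌊S * 2 ^ n⌋₊ ≤ q m n + 4 := fun m => by
    simp only [r, show (bits S n).length = n by simp [bits], floor_mul_two_pow_eq hS]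
  have hpow : (0 : ℝ) < 2 ^ n := by positivity
  have hex : ∃ m, r (bits S n) m := by
    have hlim_mul : Tendsto (fun m => F m * 2 ^ n) atTop (nhds (S * 2 ^ n)) := hlim.mul_const _
    obtain ⟨m, hm⟩ := (hlim_mul.eventually_const_lt (sub_one_lt _)).exists
    refine ⟨m, (hr_iff m).2 (Nat.cast_le (α := ℝ).1 ?_)⟩
    push_cast
    linarith [(abs_le.1 (hq_error m n)).2, Nat.floor_le (mul_nonneg hS hpow.le)]
  obtain ⟨m, hmem, hm⟩ := hsearch _ hex
  obtain ⟨p, hp_length, hp⟩ := hU.exists_length_eq_H (binaryString (V (m + m₀)) 0)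
  refine ⟨m, ?_, p, Part.dom_iff_mem.2 ⟨_, hp⟩, fun hp_stage => ?_,
    hp_length.trans_le (hd _ _ (Part.mem_map _ hmem))⟩
  · have hfloor : ((⌊S * 2 ^ n⌋₊ : ℕ) : ℝ) ≤ q m n + 4 := by exact_mod_cast (hr_iff m).1 hm
    rw [le_div_iff₀ hpow, sub_mul]
    linarith [(abs_le.1 (hq_error m n)).1, Nat.lt_floor_add_one (S * 2 ^ n)]
  · have hlt := hV_length _ p hp_stage _ hp
    rw [length_binaryString] at hlt
    exact hlt.false

theorem add_logb_le_of_mul_two_rpow_le {T c C : ℝ} (hT : 0 < T) (hc : 0 < c) (hC : 0 < C)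
    {l n : ℕ} (h : c * ((l + 1) * 2 ^ (-(l : ℝ) / T)) ≤ C / 2 ^ n) :
    T * n + T * Real.logb 2 (l + 1) ≤ l + T * (Real.logb 2 C - Real.logb 2 c) := by
  have hl : (0 : ℝ) < l + 1 := by positivity
  have hlog := Real.logb_le_logb_of_le one_lt_two (by positivity) h
  rw [Real.logb_mul hc.ne' (by positivity), Real.logb_mul hl.ne' (by positivity),
    Real.logb_rpow two_pos (by norm_num), Real.logb_div hC.ne' (by positivity), Real.logb_pow,
    Real.logb_self_eq_one one_lt_two] at hlog
  have hmul := mul_le_mul_of_nonneg_left hlog hT.le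
  have hcancel : T * (-(l : ℝ) / T) = -l := mul_div_cancel₀ _ hT.ne'
  linarith

/-- The factor `l + 1` contributes the unbounded term `T * log₂ n` to the lower bound for `h n`. -/
theorem tendsto_sub_mul_of_mul_two_rpow_le {T c C : ℝ} (hT : 0 < T) (hc : 0 < c) (hC : 0 < C)
    {h : ℕ → ℕ} {d : ℕ}
    (hh : ∀ n, ∃ l : ℕ, l ≤ h n + d ∧ c * ((l + 1) * 2 ^ (-(l : ℝ) / T)) ≤ C / 2 ^ n) :
    Tendsto (fun n => (h n : ℝ) - T * n) atTop atTop := by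
  set b := T * (Real.logb 2 C - Real.logb 2 c)
  have hlinear : Tendsto (fun n : ℕ => T * n - b) atTop atTop :=
    tendsto_atTop_add_const_right _ _ (tendsto_natCast_atTop_atTop.const_mul_atTop hT)
  have hlog : Tendsto (fun n : ℕ => T * Real.logb 2 (T * n - b) - b - d) atTop atTop :=
    tendsto_atTop_add_const_right _ _ (tendsto_atTop_add_const_right _ _
      (((Real.tendsto_logb_atTop one_lt_two).comp hlinear).const_mul_atTop hT))
  refine tendsto_atTop_mono' _ ?_ hlog
  filter_upwards [hlinear.eventually_gt_atTop 0] with n hn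
  obtain ⟨l, hl, hle⟩ := hh n
  have hbound := add_logb_le_of_mul_two_rpow_le hT hc hC hle
  have hlogb_nonneg : 0 ≤ T * Real.logb 2 (l + 1) :=
    mul_nonneg hT.le (Real.logb_nonneg one_lt_two (by simp))
  have hlogb_le : T * Real.logb 2 (T * n - b) ≤ T * Real.logb 2 (l + 1) :=
    mul_le_mul_of_nonneg_left (Real.logb_le_logb_of_le one_lt_two hn (by linarith)) hT.le
  have hl' : (l : ℝ) ≤ h n + d := by exact_mod_cast hl
  linarith

/-! ### Compressibility -/

theorem le_add_two_pow_of_abs_sub_le {G : ℕ → ℝ} {q : ℕ → ℕ} {N : ℕ}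
    (hq : ∀ m, |G m * 2 ^ N - q m| ≤ 2) {m m' : ℕ} (h : q m' ≤ q m) :
    G m' ≤ G m + 4 / 2 ^ N := by
  have hpow : (0 : ℝ) < 2 ^ N := by positivity
  have hcast : (q m' : ℝ) ≤ q m := by exact_mod_cast h
  rw [← mul_le_mul_iff_of_pos_right hpow, add_mul, div_mul_cancel₀ _ hpow.ne']
  linarith [(abs_le.1 (hq m)).1, (abs_le.1 (hq m')).2]

theorem lt_two_pow_add_two {x : ℝ} (hx : x ≤ 1) {q N : ℕ} (hq : |x * 2 ^ N - q| ≤ 2) :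
    q < 2 ^ (N + 2) := by
  have hpow : (1 : ℝ) ≤ 2 ^ N := one_le_pow₀ one_le_two
  have hlt : (q : ℝ) < 2 ^ (N + 2) := by
    rw [pow_add]
    nlinarith [(abs_le.1 hq).1]
  exact_mod_cast hlt

theorem exists_floor_eq_add_sub_two {x y C : ℝ} (hy : 0 ≤ y) (hxy : x ≤ y) (hyx : y - x ≤ C) {q : ℕ}
    (hq : |x - q| ≤ 2) : ∃ e < ⌊C⌋₊ + 6, ⌊y⌋₊ = q + e - 2 := by
  have hlower : (q : ℝ) < (⌊y⌋₊ + 3 : ℕ) := by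
    push_cast
    linarith [(abs_le.1 hq).1, Nat.lt_floor_add_one y]
  have hupper : (⌊y⌋₊ : ℝ) < (q + ⌊C⌋₊ + 3 : ℕ) := by
    push_cast
    linarith [(abs_le.1 hq).2, Nat.floor_le hy, Nat.lt_floor_add_one C]
  rw [Nat.cast_lt] at hlower hupper
  exact ⟨⌊y⌋₊ + 2 - q, by omega, by omega⟩

theorem exists_forall_le_of_forall_lt {q : ℕ → ℕ} {b : ℕ} (hq : ∀ m, q m < b) :
    ∃ m, ∀ m', q m' ≤ q m := by
  have hbdd : BddAbove (Set.range q) := ⟨b, Set.forall_mem_range.2 fun m => (hq m).le⟩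
  obtain ⟨m, hm⟩ := Nat.sSup_mem (Set.range_nonempty q) hbdd
  exact ⟨m, fun m' => (le_csSup hbdd (Set.mem_range_self m')).trans_eq hm.symm⟩

theorem bits_eq_binaryString_div {x : ℝ} (hx : 0 ≤ x) (n k : ℕ) :
    bits x n = binaryString n (⌊x * 2 ^ (n + k)⌋₊ / 2 ^ k) := by
  rw [floor_mul_two_pow_add_div, bits_eq_binaryString hx]

/-- The number `k` reached by the approximations of `G` to precision `A * L` serves as the program:
waiting for it yields a stage `m` at which `F m` approximates `S` to precision `M * L`. Here
`n = M * a + r` and `L = a + 1`. -/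
theorem IsOptimal.exists_H_bits_add_le {U : Computer} (hU : IsOptimal U) {F G : ℕ → ℝ} {S C : ℝ}
    (hF : UniformlyComputable F) (hG : UniformlyComputable G) (hS : 0 ≤ S)
    (hF_le : ∀ m, F m ≤ S) (hG_le : ∀ m, G m ≤ 1) {A M : ℕ}
    (hFG : ∀ m L, (∀ m' ≥ m, G m' ≤ G m + 4 / 2 ^ (A * L)) → S - F m ≤ C / 2 ^ (M * L))
    {r : ℕ} (hr : r < M) : ∃ c, ∀ a, H U (bits S (M * a + r)) ≤ (A + 1) * a + c := by
  obtain ⟨qF, hqF, hqF_error⟩ := hF.exists_error_two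
  obtain ⟨qG, hqG, hqG_error⟩ := hG.exists_error_two
  have hqG' : Computable fun y : (ℕ × ℕ) × ℕ => qG y.2 (A * (y.1.1 + 1)) :=
    hqG.comp (g := fun y : (ℕ × ℕ) × ℕ => (y.2, A * (y.1.1 + 1))) (by fun_prop)
  have hqF' : Computable fun y : (ℕ × ℕ) × ℕ => qF y.2 (M * (y.1.1 + 1)) :=
    hqF.comp (g := fun y : (ℕ × ℕ) × ℕ => (y.2, M * (y.1.1 + 1))) (by fun_prop)
  obtain ⟨d, hd⟩ := hU.exists_H_search_le (ℓ := fun a => A * (a + 1) + 2)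
    (r := fun y m => qG m (A * (y.1 + 1)) = y.2)
    (f := fun (e : Fin (⌊C⌋₊ + 6)) y m =>
      binaryString (M * y.1 + r) ((qF m (M * (y.1 + 1)) + e - 2) / 2 ^ (M - r)))
    (by fun_prop) (by fun_prop) (fun e => by fun_prop)
  refine ⟨A + 2 + d, fun a => ?_⟩
  have hqG_lt : ∀ m, qG m (A * (a + 1)) < 2 ^ (A * (a + 1) + 2) := fun m =>
    lt_two_pow_add_two (hG_le m) (hqG_error m _)
  obtain ⟨m₀, hm₀⟩ := exists_forall_le_of_forall_lt hqG_lt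
  obtain ⟨m, hm, hH⟩ := hd a _ (hqG_lt m₀) ⟨m₀, rfl⟩
  have hgap : (S - F m) * 2 ^ (M * (a + 1)) ≤ C :=
    (le_div_iff₀ (by positivity)).1 <| hFG m (a + 1) fun m' _ =>
      le_add_two_pow_of_abs_sub_le (fun m => hqG_error m _) (hm ▸ hm₀ m')
  have hpow : (0 : ℝ) ≤ 2 ^ (M * (a + 1)) := by positivity
  rw [sub_mul] at hgap
  obtain ⟨e, he, hfloor⟩ := exists_floor_eq_add_sub_two (mul_nonneg hS hpow)
    (mul_le_mul_of_nonneg_right (hF_le m) hpow) hgap (hqF_error m _)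
  have hbits : bits S (M * a + r) =
      binaryString (M * a + r) ((qF m (M * (a + 1)) + e - 2) / 2 ^ (M - r)) := by
    rw [bits_eq_binaryString_div hS _ (M - r), ← hfloor,
      show M * a + r + (M - r) = M * (a + 1) by rw [mul_add_one]; omega]
  rw [hbits]
  exact (hH ⟨e, he⟩).trans_eq (by ring)

theorem IsOptimal.exists_H_bits_le {U : Computer} (hU : IsOptimal U) {F G : ℕ → ℝ} {S C : ℝ}
    (hF : UniformlyComputable F) (hG : UniformlyComputable G) (hS : 0 ≤ S)
    (hF_le : ∀ m, F m ≤ S) (hG_le : ∀ m, G m ≤ 1) {A M : ℕ} (hM : 0 < M)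
    (hFG : ∀ m L, (∀ m' ≥ m, G m' ≤ G m + 4 / 2 ^ (A * L)) → S - F m ≤ C / 2 ^ (M * L)) :
    ∃ c, ∀ n, H U (bits S n) ≤ (A + 1) * (n / M) + c := by
  choose c hc using fun r : Fin M => hU.exists_H_bits_add_le hF hG hS hF_le hG_le hFG r.2
  refine ⟨∑ r, c r, fun n => ?_⟩
  have hn := hc ⟨n % M, Nat.mod_lt n hM⟩ (n / M)
  rw [Nat.div_add_mod] at hn
  exact hn.trans (Nat.add_le_add_left
    (Finset.single_le_sum (fun _ _ => Nat.zero_le _) (Finset.mem_univ _)) _)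

theorem dCompressible_of_exists_H_bits_le {U : Computer} {T S : ℝ} (hT_pos : 0 < T) (hT_lt : T < 1)
    (h : ∀ A M : ℕ, 0 < M → T < (A : ℝ) / M → (A : ℝ) / M ≤ 1 →
      ∃ c, ∀ n, H U (bits S n) ≤ (A + 1) * (n / M) + c) : DCompressible U T S := by
  refine le_of_forall_pos_le_add fun ε hε => ?_
  obtain ⟨M, hM⟩ := exists_nat_gt (max (4 / ε) (1 / (1 - T)))
  obtain ⟨hMε, hMT⟩ := max_lt_iff.1 hM
  have hM_pos : (0 : ℝ) < M := (div_pos four_pos hε).trans hMε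
  rw [div_lt_iff₀ hε] at hMε
  rw [div_lt_iff₀ (sub_pos.2 hT_lt)] at hMT
  set A := ⌊T * M⌋₊ + 1 with hA
  have hA_gt : T * M < A := by rw [hA]; exact_mod_cast Nat.lt_floor_add_one (T * M)
  have hA_le : (A : ℝ) ≤ T * M + 1 := by
    rw [hA]
    push_cast
    linarith [Nat.floor_le (mul_nonneg hT_pos.le hM_pos.le)]
  obtain ⟨c, hc⟩ := h A M (by exact_mod_cast hM_pos) ((lt_div_iff₀ hM_pos).2 hA_gt)
    ((div_le_one hM_pos).2 (by linarith))
  refine limsup_le_of_le (isCoboundedUnder_le_of_le atTop (x := 0) fun n => by positivity) ?_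
  filter_upwards [eventually_gt_atTop 0,
    tendsto_natCast_atTop_atTop.eventually_ge_atTop (2 * c / ε)] with n hn hn_large
  rw [div_le_iff₀ hε] at hn_large
  rw [div_le_iff₀ (by exact_mod_cast hn)]
  calc (H U (bits S n) : ℝ) ≤ (A + 1) * (n / M : ℕ) + c := by exact_mod_cast hc n
    _ ≤ (A + 1) * (n / M) + c := by gcongr; exact Nat.cast_div_le
    _ = (A + 1) / M * n + c := by ring
    _ ≤ (T + ε / 2) * n + c := by
      gcongr
      rw [div_le_iff₀ hM_pos]
      linarith
    _ ≤ (T + ε) * n := by linarith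

/-! ### Limits comparable to stage sums -/

theorem computableReal_one : ComputableReal 1 :=
  ⟨fun _ => 1, by fun_prop, fun n hn => by simpa using Nat.zero_lt_of_lt hn⟩

theorem ComputableReal.uniformlyComputable_boltzmann {T : ℝ} (hT : ComputableReal T)
    (hT_pos : 0 < T) : UniformlyComputable (boltzmann T) :=
  (hT.uniformlyComputable_two_rpow hT_pos).comp Computable.list_length

/-- The contribution to `∑ (|p| + 1) * 2 ^ (-|p| / T)` of the programs entering between the stages
`m` and `m'`. -/
noncomputable def Computer.stageIncrement (U : Computer) (T : ℝ) (m m' : ℕ) : ℝ :=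
  ∑ p ∈ U.stage m' \ U.stage m, (p.length + 1) * boltzmann T p

theorem Computer.stageIncrement_nonneg (U : Computer) (T : ℝ) (m m' : ℕ) :
    0 ≤ U.stageIncrement T m m' :=
  Finset.sum_nonneg fun p _ => length_add_one_mul_boltzmann_nonneg T p

theorem Computer.exists_length_add_one_mul_boltzmann_le_stageIncrement (U : Computer) (T : ℝ)
    {m : ℕ} {p : List Bool} (hp : p ∈ U.domain) (hpm : p ∉ U.stage m) :
    ∃ m₁, ∀ m' ≥ m₁, (p.length + 1) * boltzmann T p ≤ U.stageIncrement T m m' := by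
  obtain ⟨m₁, hm₁⟩ := mem_domain_iff_exists_mem_stage.1 hp
  exact ⟨m₁, fun m' hm' =>
    Finset.single_le_sum (f := fun p : List Bool => (p.length + 1) * boltzmann T p)
      (fun p _ => length_add_one_mul_boltzmann_nonneg T p)
      (Finset.mem_sdiff.2 ⟨U.stage_mono hm' hm₁, hpm⟩)⟩

theorem Computer.exists_stageIncrement_le (U : Computer) {T T' : ℝ} (hT : 0 < T) (hTT' : T < T')
    (hT' : T' ≤ 1) : ∃ C > 0, ∀ m m', U.stageIncrement T m m' ≤
      C * (∑ p ∈ U.stage m' \ U.stage m, boltzmann 1 p) ^ (1 / T') := by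
  obtain ⟨C, hC, hle⟩ := exists_length_add_one_mul_boltzmann_le hT hTT'
  refine ⟨C, hC, fun m m' => ?_⟩
  calc U.stageIncrement T m m' ≤ C * ∑ p ∈ U.stage m' \ U.stage m, boltzmann T' p := by
        rw [Finset.mul_sum]
        exact Finset.sum_le_sum fun p _ => hle p
    _ ≤ _ := by
        gcongr
        exact sum_boltzmann_le_rpow (hT.trans hTT') hT' _

theorem four_div_two_pow_rpow {A M : ℕ} (hA : A ≠ 0) (L : ℕ) :
    (4 / 2 ^ (A * L) : ℝ) ^ (1 / ((A : ℝ) / M)) = 4 ^ ((M : ℝ) / A) / 2 ^ (M * L) := by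
  rw [one_div_div, Real.div_rpow (by norm_num) (by positivity), ← Real.rpow_natCast 2 (A * L),
    ← Real.rpow_mul two_pos.le, ← Real.rpow_natCast 2 (M * L)]
  congr 2
  push_cast
  field_simp

/-- `S` is the limit of a uniformly computable sequence `F` whose increments are, up to constant
factors, those of `∑ (|p| + 1) * 2 ^ (-|p| / T)` along the stages of `U`. The shift `m₀` makes it
possible to ignore the stages at which short programs are still missing. -/
structure ApproximatedByStages (U : Computer) (T S : ℝ) (m₀ : ℕ) (F : ℕ → ℝ) : Prop where
  uniformlyComputable : UniformlyComputable F
  tendsto : Tendsto F atTop (nhds S)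
  exists_mul_le_sub : ∃ c > 0, ∀ m m', m ≤ m' →
    c * U.stageIncrement T (m + m₀) (m' + m₀) ≤ F m' - F m
  exists_sub_le_mul : ∃ C > 0, ∀ m m', m ≤ m' →
    F m' - F m ≤ C * U.stageIncrement T (m + m₀) (m' + m₀)

namespace ApproximatedByStages

variable {U : Computer} {T S : ℝ} {m₀ : ℕ} {F : ℕ → ℝ}

theorem monotone (h : ApproximatedByStages U T S m₀ F) : Monotone F := fun m m' hmm' => by
  obtain ⟨c, hc, hle⟩ := h.exists_mul_le_sub
  exact sub_nonneg.1 ((mul_nonneg hc.le (U.stageIncrement_nonneg ..)).trans (hle m m' hmm'))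

theorem le (h : ApproximatedByStages U T S m₀ F) (m : ℕ) : F m ≤ S :=
  h.monotone.ge_of_tendsto h.tendsto m

theorem nonneg (h : ApproximatedByStages U T S m₀ F) : 0 ≤ S :=
  (h.uniformlyComputable.nonneg 0).trans (h.le 0)

theorem leftComputable_sub_natCast (h : ApproximatedByStages U T S m₀ F) (K : ℕ) :
    LeftComputable (S - K) :=
  leftComputable_sub_natCast_of_tendsto h.uniformlyComputable h.le h.tendsto K

theorem exists_mul_le_sub_of_notMem_stage (h : ApproximatedByStages U T S m₀ F) :
    ∃ c > 0, ∀ m, ∀ p ∈ U.domain, p ∉ U.stage (m + m₀) →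
      c * ((p.length + 1) * boltzmann T p) ≤ S - F m := by
  obtain ⟨c, hc, hle⟩ := h.exists_mul_le_sub
  refine ⟨c, hc, fun m p hp hpm => ?_⟩
  obtain ⟨m₁, hm₁⟩ := U.exists_length_add_one_mul_boltzmann_le_stageIncrement T hp hpm
  calc c * ((p.length + 1) * boltzmann T p)
      ≤ c * U.stageIncrement T (m + m₀) (max m m₁ + m₀) := by
        gcongr
        exact hm₁ _ ((le_max_right m m₁).trans (Nat.le_add_right _ _))
    _ ≤ F (max m m₁) - F m := hle _ _ (le_max_left _ _)
    _ ≤ S - F m := sub_le_sub_right (h.le _) _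

theorem chaitinRandom (h : ApproximatedByStages U T S m₀ F) (hU : IsOptimal U) (hT : 0 < T) :
    ChaitinRandom U T S := by
  obtain ⟨c, hc, hle⟩ := h.exists_mul_le_sub_of_notMem_stage
  obtain ⟨d, hd⟩ := hU.exists_notMem_stage_of_tendsto h.uniformlyComputable h.nonneg h.tendsto m₀
  refine tendsto_sub_mul_of_mul_two_rpow_le hT hc (by norm_num : (0 : ℝ) < 7) (d := d) fun n => ?_
  obtain ⟨m, hgap, p, hp, hpm, hlength⟩ := hd n
  exact ⟨p.length, hlength, (hle m p hp hpm).trans hgap⟩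

theorem exists_sub_le_div_two_pow (h : ApproximatedByStages U T S m₀ F) (hT : 0 < T) {A M : ℕ}
    (hTA : T < (A : ℝ) / M) (hAM : (A : ℝ) / M ≤ 1) :
    ∃ C, ∀ m L, (∀ m' ≥ m, ∑ p ∈ U.stage (m' + m₀), boltzmann 1 p ≤
      ∑ p ∈ U.stage (m + m₀), boltzmann 1 p + 4 / 2 ^ (A * L)) → S - F m ≤ C / 2 ^ (M * L) := by
  obtain ⟨C, hC, hle⟩ := h.exists_sub_le_mul
  obtain ⟨C', hC', hle'⟩ := U.exists_stageIncrement_le hT hTA hAM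
  have hA : A ≠ 0 := by
    rintro rfl
    rw [Nat.cast_zero, zero_div] at hTA
    exact hT.not_gt hTA
  refine ⟨C * C' * 4 ^ ((M : ℝ) / A), fun m L hG => ?_⟩
  refine le_of_tendsto (h.tendsto.sub_const (F m)) ?_
  filter_upwards [eventually_ge_atTop m] with m' hmm'
  have hsum : ∑ p ∈ U.stage (m' + m₀) \ U.stage (m + m₀), boltzmann 1 p ≤ 4 / 2 ^ (A * L) := by
    rw [← add_le_add_iff_right (∑ p ∈ U.stage (m + m₀), boltzmann 1 p),
      Finset.sum_sdiff (U.stage_mono (Nat.add_le_add_right hmm' m₀)), add_comm (4 / _ : ℝ)]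
    exact hG m' hmm'
  calc F m' - F m ≤ C * (C' * _) := (hle m m' hmm').trans (by gcongr; exact hle' _ _)
    _ ≤ C * (C' * (4 / 2 ^ (A * L) : ℝ) ^ (1 / ((A : ℝ) / M))) := by
      gcongr
      exact Finset.sum_nonneg fun p _ => (boltzmann_pos 1 p).le
    _ = C * C' * 4 ^ ((M : ℝ) / A) / 2 ^ (M * L) := by rw [four_div_two_pow_rpow hA]; ring

theorem dCompressible (h : ApproximatedByStages U T S m₀ F) (hU : IsOptimal U)
    (hT_pos : 0 < T) (hT_lt : T < 1) : DCompressible U T S := by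
  refine dCompressible_of_exists_H_bits_le hT_pos hT_lt fun A M hM hTA hAM => ?_
  obtain ⟨C, hC⟩ := h.exists_sub_le_div_two_pow hT_pos hTA hAM
  have hkraft : ∀ m, ∑ p ∈ U.stage (m + m₀), boltzmann 1 p ≤ 1 := fun m =>
    (U.prefixFree.subset (U.stage_subset_domain _)).sum_boltzmann_one_le_one
  exact hU.exists_H_bits_le h.uniformlyComputable
    ((U.uniformlyComputable_sum_stage
      (computableReal_one.uniformlyComputable_boltzmann one_pos)).comp (by fun_prop))
    h.nonneg h.le hkraft hM hC

end ApproximatedByStages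

/-! ### Entropy -/

/-- The statistical mechanical entropy at temperature `T` of a system with partition function `z`
and unnormalized energy `w = ∑ |p| * 2 ^ (-|p| / T)`. -/
noncomputable def entropy (T w z : ℝ) : ℝ := 1 / T * (w / z) + Real.logb 2 z

theorem logb_two_add_sub_logb_two_le {z₀ z Δ : ℝ} (hz₀ : 0 < z₀) (hz : z₀ ≤ z) (hΔ : 0 ≤ Δ) :
    Real.logb 2 (z + Δ) - Real.logb 2 z ≤ 2 / z₀ * Δ := by
  have hz_pos : 0 < z := hz₀.trans_le hz
  have hle := abs_logb_two_sub_logb_two_le (a := (z + Δ) / z)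
    ((one_le_div hz_pos).2 (by linarith)) le_rfl
  rw [Real.logb_one, sub_zero, Real.logb_div (by positivity) hz_pos.ne', add_div,
    div_self hz_pos.ne', add_sub_cancel_left, abs_of_nonneg (a := Δ / z) (by positivity)] at hle
  calc Real.logb 2 (z + Δ) - Real.logb 2 z ≤ 2 * (Δ / z) := (le_abs_self _).trans hle
    _ ≤ 2 * (Δ / z₀) := by gcongr
    _ = 2 / z₀ * Δ := by ring

theorem div_le_add_div_add_sub_div {R w z Δw Δz : ℝ} (hz : 0 < z) (hΔz : 0 ≤ Δz)
    (hw : w ≤ R * z) (hR : 2 * R * Δz ≤ Δw) :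
    Δw / (2 * (z + Δz)) ≤ (w + Δw) / (z + Δz) - w / z := by
  have hzΔz : 0 < z + Δz := by linarith
  have hexchange : 2 * (w * Δz) ≤ Δw * z := by nlinarith
  rw [div_sub_div _ _ hzΔz.ne' hz.ne', div_le_div_iff₀ (by positivity) (by positivity)]
  nlinarith

theorem le_entropy_add_sub_entropy {T R w z Δw Δz : ℝ} (hT : 0 < T) (hz : 0 < z) (hΔz : 0 ≤ Δz)
    (hw : w ≤ R * z) (hR : 2 * R * Δz ≤ Δw) :
    1 / T * (Δw / (2 * (z + Δz))) ≤ entropy T (w + Δw) (z + Δz) - entropy T w z := by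
  have hlog : Real.logb 2 z ≤ Real.logb 2 (z + Δz) :=
    Real.logb_le_logb_of_le one_lt_two hz (by linarith)
  have hratio : 1 / T * (Δw / (2 * (z + Δz))) ≤ 1 / T * ((w + Δw) / (z + Δz) - w / z) := by
    gcongr
    exact div_le_add_div_add_sub_div hz hΔz hw hR
  rw [entropy, entropy]
  linarith

theorem entropy_add_sub_entropy_le {T w z₀ z Δw Δz : ℝ} (hT : 0 < T) (hz₀ : 0 < z₀) (hz : z₀ ≤ z)
    (hw : 0 ≤ w) (hΔw : 0 ≤ Δw) (hΔz : 0 ≤ Δz) :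
    entropy T (w + Δw) (z + Δz) - entropy T w z ≤ (1 / T + 2) / z₀ * (Δw + Δz) := by
  have hz_pos : 0 < z := hz₀.trans_le hz
  have hlog := logb_two_add_sub_logb_two_le hz₀ hz hΔz
  have hratio : 1 / T * ((w + Δw) / (z + Δz)) ≤ 1 / T * (w / z + Δw / z₀) := by
    rw [add_div]
    gcongr <;> linarith
  have hslack : 0 ≤ (2 * Δw + 1 / T * Δz) / z₀ := by positivity
  have hsplit : (1 / T + 2) / z₀ * (Δw + Δz) =
      1 / T * (Δw / z₀) + 2 / z₀ * Δz + (2 * Δw + 1 / T * Δz) / z₀ := by ring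
  rw [entropy, entropy]
  linarith

theorem entropy_mul_mul {T w z k : ℝ} (hk : 0 < k) (hz : 0 < z) :
    entropy T (k * w) (k * z) = entropy T w z + Real.logb 2 k := by
  rw [entropy, entropy, mul_div_mul_left _ _ hk.ne', Real.logb_mul hk.ne' hz.ne']
  ring

theorem tendsto_entropy {ι : Type*} {l : Filter ι} {w z : ι → ℝ} {W Z : ℝ} (T : ℝ)
    (hw : Tendsto w l (nhds W)) (hz : Tendsto z l (nhds Z)) (hZ : 0 < Z) :
    Tendsto (fun i => entropy T (w i) (z i)) l (nhds (entropy T W Z)) :=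
  ((hw.div hz hZ.ne').const_mul _).add ((hz.log hZ.ne').div_const _)

theorem uniformlyComputable_entropy {T : ℝ} {w z : α → ℝ} (hT : ComputableReal T)
    (hT_pos : 0 < T) (hT_le : T ≤ 1) (hw : UniformlyComputable w) (hz : UniformlyComputable z)
    (hz_one : ∀ a, 1 ≤ T * z a) : UniformlyComputable fun a => entropy T (w a) (z a) := by
  have hz_one' : ∀ a, 1 ≤ z a := fun a =>
    (hz_one a).trans (mul_le_of_le_one_left (hz.nonneg a) hT_le)
  simp only [entropy, div_mul_div_comm, one_mul]
  exact (hw.div ((hT.uniformlyComputable hT_pos.le).mul hz) hz_one).add (hz.logb hz_one')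

namespace Computer

/-- The partition function `Z(T)`. -/
noncomputable def partitionFunction (U : Computer) (T : ℝ) : ℝ := ∑' p : U.domain, boltzmann T p

/-- The unnormalized energy `W(1, T)`. -/
noncomputable def energy (U : Computer) (T : ℝ) : ℝ :=
  ∑' p : U.domain, (p : List Bool).length * boltzmann T p

/-- The partial sum of `Z(T)` over the programs of a stage. -/
noncomputable def stagePartitionFunction (U : Computer) (T : ℝ) (m : ℕ) : ℝ :=
  ∑ p ∈ U.stage m, boltzmann T p

/-- The partial sum of `W(1, T)` over the programs of a stage. -/
noncomputable def stageEnergy (U : Computer) (T : ℝ) (m : ℕ) : ℝ :=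
  ∑ p ∈ U.stage m, p.length * boltzmann T p

/-- The entropy of the system formed by the programs of a stage. -/
noncomputable def stageEntropy (U : Computer) (T : ℝ) (m : ℕ) : ℝ :=
  entropy T (U.stageEnergy T m) (U.stagePartitionFunction T m)

variable {U : Computer} {T : ℝ} {m₀ m m' : ℕ} {p₀ : List Bool}

theorem sum_stage_le_tsum {x : List Bool → ℝ} (hx : ∀ p, 0 ≤ x p)
    (hsum : Summable fun p : U.domain => x p) (m : ℕ) :
    ∑ p ∈ U.stage m, x p ≤ ∑' p : U.domain, x p :=
  Monotone.ge_of_tendsto (fun _ _ hmm' =>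
    Finset.sum_le_sum_of_subset_of_nonneg (U.stage_mono hmm') fun p _ _ => hx p)
    (U.tendsto_sum_stage hsum) m

theorem boltzmann_le_stagePartitionFunction (hp₀ : p₀ ∈ U.stage m₀) (hm : m₀ ≤ m) :
    boltzmann T p₀ ≤ U.stagePartitionFunction T m :=
  Finset.single_le_sum (fun p _ => (boltzmann_pos T p).le) (U.stage_mono hm hp₀)

theorem boltzmann_le_partitionFunction (hT_pos : 0 < T) (hT_lt : T < 1) (hp₀ : p₀ ∈ U.domain) :
    boltzmann T p₀ ≤ U.partitionFunction T :=
  (U.summable_boltzmann hT_pos hT_lt).le_tsum ⟨p₀, hp₀⟩ fun p _ => (boltzmann_pos T p).le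

theorem sum_stage_add_sum_sdiff (x : List Bool → ℝ) (hmm' : m ≤ m') :
    ∑ p ∈ U.stage m, x p + ∑ p ∈ U.stage m' \ U.stage m, x p = ∑ p ∈ U.stage m', x p := by
  rw [add_comm, Finset.sum_sdiff (U.stage_mono hmm')]

theorem stagePartitionFunction_add (T : ℝ) (hmm' : m ≤ m') :
    U.stagePartitionFunction T m + ∑ p ∈ U.stage m' \ U.stage m, boltzmann T p =
      U.stagePartitionFunction T m' :=
  sum_stage_add_sum_sdiff (boltzmann T) hmm'

theorem stageEnergy_add (T : ℝ) (hmm' : m ≤ m') :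
    U.stageEnergy T m + ∑ p ∈ U.stage m' \ U.stage m, p.length * boltzmann T p =
      U.stageEnergy T m' :=
  sum_stage_add_sum_sdiff (fun p => p.length * boltzmann T p) hmm'

theorem stageEntropy_sub_le (hT : 0 < T) (hp₀ : p₀ ∈ U.stage m₀) (hm : m₀ ≤ m)
    (hmm' : m ≤ m') : U.stageEntropy T m' - U.stageEntropy T m ≤
      (1 / T + 2) / boltzmann T p₀ * U.stageIncrement T m m' := by
  have hle := entropy_add_sub_entropy_le hT (boltzmann_pos T p₀)
    (boltzmann_le_stagePartitionFunction hp₀ hm) (sum_length_mul_boltzmann_nonneg T (U.stage m))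
    (sum_length_mul_boltzmann_nonneg T (U.stage m' \ U.stage m))
    (sum_boltzmann_nonneg T (U.stage m' \ U.stage m))
  rw [← Finset.sum_add_distrib] at hle
  simp only [← add_one_mul] at hle
  rwa [← stageEnergy, stageEnergy_add T hmm', stagePartitionFunction_add T hmm'] at hle

theorem stageEnergy_le_mul_stagePartitionFunction (hT_pos : 0 < T) (hT_lt : T < 1)
    (hp₀ : p₀ ∈ U.stage m₀) (hm : m₀ ≤ m) :
    U.stageEnergy T m ≤ U.energy T / boltzmann T p₀ * U.stagePartitionFunction T m := by
  have hle : U.stageEnergy T m ≤ U.energy T := sum_stage_le_tsum (length_mul_boltzmann_nonneg T)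
    (U.summable_length_mul_boltzmann hT_pos hT_lt) m
  rw [div_mul_eq_mul_div, le_div_iff₀ (boltzmann_pos T p₀)]
  exact mul_le_mul hle (boltzmann_le_stagePartitionFunction hp₀ hm) (boltzmann_pos T p₀).le
    ((sum_length_mul_boltzmann_nonneg T _).trans hle)

theorem half_stageIncrement_le (hlong : ∀ p ∈ U.stage m' \ U.stage m, 1 ≤ (p.length : ℝ)) :
    U.stageIncrement T m m' / 2 ≤ ∑ p ∈ U.stage m' \ U.stage m, p.length * boltzmann T p := by
  rw [stageIncrement, Finset.sum_div]
  refine Finset.sum_le_sum fun p hp => ?_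
  rw [mul_div_right_comm]
  exact mul_le_mul_of_nonneg_right (by linarith [hlong p hp]) (boltzmann_pos T p).le

theorem mul_stageIncrement_le_stageEntropy_sub (hT_pos : 0 < T) (hT_lt : T < 1)
    (hp₀ : p₀ ∈ U.stage m₀) (hlong : ∀ p ∈ U.domain, p ∉ U.stage m₀ →
      1 ≤ (p.length : ℝ) ∧ 2 * (U.energy T / boltzmann T p₀) ≤ p.length)
    (hm : m₀ ≤ m) (hmm' : m ≤ m') :
    1 / (4 * T * U.partitionFunction T) * U.stageIncrement T m m' ≤
      U.stageEntropy T m' - U.stageEntropy T m := by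
  have hnew : ∀ p ∈ U.stage m' \ U.stage m,
      1 ≤ (p.length : ℝ) ∧ 2 * (U.energy T / boltzmann T p₀) ≤ p.length := fun p hp =>
    hlong p (U.stage_subset_domain m' (Finset.mem_sdiff.1 hp).1)
      fun hpm₀ => (Finset.mem_sdiff.1 hp).2 (U.stage_mono hm hpm₀)
  have hZ_pos : ∀ {k}, m₀ ≤ k → 0 < U.stagePartitionFunction T k := fun hk =>
    (boltzmann_pos T p₀).trans_le (boltzmann_le_stagePartitionFunction hp₀ hk)
  have hZ_le : U.stagePartitionFunction T m' ≤ U.partitionFunction T :=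
    sum_stage_le_tsum (fun p => (boltzmann_pos T p).le) (U.summable_boltzmann hT_pos hT_lt) m'
  have henergy : 2 * (U.energy T / boltzmann T p₀) * ∑ p ∈ U.stage m' \ U.stage m, boltzmann T p ≤
      ∑ p ∈ U.stage m' \ U.stage m, p.length * boltzmann T p := by
    rw [Finset.mul_sum]
    exact Finset.sum_le_sum fun p hp =>
      mul_le_mul_of_nonneg_right (hnew p hp).2 (boltzmann_pos T p).le
  have hle := le_entropy_add_sub_entropy hT_pos (hZ_pos hm) (sum_boltzmann_nonneg T _)
    (stageEnergy_le_mul_stagePartitionFunction hT_pos hT_lt hp₀ hm) henergy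
  rw [stageEnergy_add T hmm', stagePartitionFunction_add T hmm'] at hle
  calc 1 / (4 * T * U.partitionFunction T) * U.stageIncrement T m m'
      = 1 / T * ((U.stageIncrement T m m' / 2) / (2 * U.partitionFunction T)) := by ring
    _ ≤ 1 / T * ((∑ p ∈ U.stage m' \ U.stage m, p.length * boltzmann T p) /
          (2 * U.stagePartitionFunction T m')) := by
      have := hZ_pos (hm.trans hmm')
      gcongr
      · exact sum_length_mul_boltzmann_nonneg T _
      · exact half_stageIncrement_le fun p hp => (hnew p hp).1
    _ ≤ U.stageEntropy T m' - U.stageEntropy T m := hle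

theorem tendsto_stageEntropy (hT_pos : 0 < T) (hT_lt : T < 1) (hZ : 0 < U.partitionFunction T) :
    Tendsto (U.stageEntropy T) atTop (nhds (entropy T (U.energy T) (U.partitionFunction T))) :=
  tendsto_entropy T
    (U.tendsto_sum_stage (x := fun p => p.length * boltzmann T p)
      (U.summable_length_mul_boltzmann hT_pos hT_lt))
    (U.tendsto_sum_stage (U.summable_boltzmann hT_pos hT_lt)) hZ

theorem uniformlyComputable_stageEntropy_add (hT : ComputableReal T) (hT_pos : 0 < T)
    (hT_le : T ≤ 1) (hp₀ : p₀ ∈ U.stage m₀) {K : ℕ} (hK : 1 ≤ T * (2 ^ K * boltzmann T p₀)) :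
    UniformlyComputable fun m => U.stageEntropy T (m + m₀) + K := by
  have hboltzmann := hT.uniformlyComputable_boltzmann hT_pos
  have hw : UniformlyComputable fun m => U.stageEnergy T (m + m₀) :=
    (U.uniformlyComputable_sum_stage (hboltzmann.natCast_mul Computable.list_length)).comp
      (by fun_prop)
  have hz : UniformlyComputable fun m => U.stagePartitionFunction T (m + m₀) :=
    (U.uniformlyComputable_sum_stage hboltzmann).comp (by fun_prop)
  have hscaled := uniformlyComputable_entropy hT hT_pos hT_le
    (hw.natCast_mul (Computable.const (2 ^ K))) (hz.natCast_mul (Computable.const (2 ^ K)))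
    fun m => hK.trans (by
      push_cast
      gcongr
      exact boltzmann_le_stagePartitionFunction hp₀ (Nat.le_add_left _ _))
  have hlogb : Real.logb 2 ((2 ^ K : ℕ) : ℝ) = K := by
    rw [Nat.cast_pow, Nat.cast_two, Real.logb_pow, Real.logb_self_eq_one one_lt_two, mul_one]
  convert hscaled using 2 with m
  rw [entropy_mul_mul (by positivity) ((boltzmann_pos T p₀).trans_le
    (boltzmann_le_stagePartitionFunction hp₀ (Nat.le_add_left _ _))), hlogb]
  rfl

theorem exists_forall_notMem_stage_le_length (U : Computer) (L : ℕ) :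
    ∃ m, ∀ p ∈ U.domain, p ∉ U.stage m → L ≤ p.length := by
  obtain ⟨m, hm⟩ := U.exists_subset_stage
    (A := {p ∈ U.domain | p.length < L}) ((List.finite_length_lt Bool L).subset fun _ hp => hp.2)
    fun _ hp => hp.1
  exact ⟨m, fun p hp hpm => not_lt.1 fun hlt => hpm (hm ⟨hp, hlt⟩)⟩

theorem exists_approximatedByStages (hT : ComputableReal T) (hT_pos : 0 < T) (hT_lt : T < 1)
    (hp₀ : p₀ ∈ U.domain) : ∃ (K m₀ : ℕ) (F : ℕ → ℝ),
      ApproximatedByStages U T (entropy T (U.energy T) (U.partitionFunction T) + K) m₀ F := by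
  have hb_pos := boltzmann_pos T p₀
  have hZ : 0 < U.partitionFunction T :=
    hb_pos.trans_le (boltzmann_le_partitionFunction hT_pos hT_lt hp₀)
  obtain ⟨m₁, hm₁⟩ := mem_domain_iff_exists_mem_stage.1 hp₀
  obtain ⟨L, hL⟩ := exists_nat_ge (max 1 (2 * (U.energy T / boltzmann T p₀)))
  obtain ⟨m₂, hm₂⟩ := U.exists_forall_notMem_stage_le_length L
  obtain ⟨K, hK⟩ := pow_unbounded_of_one_lt (1 / (T * boltzmann T p₀)) one_lt_two
  rw [div_lt_iff₀ (by positivity), mul_left_comm] at hK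
  have hp₀_stage : p₀ ∈ U.stage (max m₁ m₂) := U.stage_mono (le_max_left _ _) hm₁
  have hlong : ∀ p ∈ U.domain, p ∉ U.stage (max m₁ m₂) →
      1 ≤ (p.length : ℝ) ∧ 2 * (U.energy T / boltzmann T p₀) ≤ p.length := fun p hp hpm =>
    max_le_iff.1 <| hL.trans <| Nat.cast_le.2 <|
      hm₂ p hp fun hpm₂ => hpm (U.stage_mono (le_max_right _ _) hpm₂)
  refine ⟨K, max m₁ m₂, fun m => U.stageEntropy T (m + max m₁ m₂) + K,
    uniformlyComputable_stageEntropy_add hT hT_pos hT_lt.le hp₀_stage hK.le,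
    ((tendsto_stageEntropy hT_pos hT_lt hZ).comp (tendsto_add_atTop_nat _)).add_const _,
    ⟨1 / (4 * T * U.partitionFunction T), by positivity, fun m m' hmm' => ?_⟩,
    ⟨(1 / T + 2) / boltzmann T p₀, by positivity, fun m m' hmm' => ?_⟩⟩ <;>
    rw [add_sub_add_right_eq_sub]
  · exact mul_stageIncrement_le_stageEntropy_sub hT_pos hT_lt hp₀_stage hlong
      (Nat.le_add_left _ _) (Nat.add_le_add_right hmm' _)
  · exact stageEntropy_sub_le hT_pos hp₀_stage (Nat.le_add_left _ _) (Nat.add_le_add_right hmm' _)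

end Computer

end

/-- **Theorem (paper Thm 12(i)).** For computable `T` with `0 < T < 1`, `Z(T)`
and `W(1,T)` converge with `Z(T) > 0`, and the statistical mechanical entropy
`S(T) = (1/T)·(W(1,T)/Z(T)) + log₂ Z(T)` is a left-computable real which is
Chaitin `T`-random and `T`-compressible. -/
theorem entropy_random_compressible (U : Computer) (hU : IsOptimal U)
    (T : ℝ) (hT0 : 0 < T) (hT1 : T < 1) (hTc : ComputableReal T) :
    Summable (zterm U T) ∧
    Summable (wlterm U T) ∧
    0 < ∑' p, zterm U T p ∧
    LeftComputable ((1 / T) * ((∑' p, wlterm U T p) / (∑' p, zterm U T p)) +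
      Real.logb 2 (∑' p, zterm U T p)) ∧
    ChaitinRandom U T ((1 / T) * ((∑' p, wlterm U T p) / (∑' p, zterm U T p)) +
      Real.logb 2 (∑' p, zterm U T p)) ∧
    DCompressible U T ((1 / T) * ((∑' p, wlterm U T p) / (∑' p, zterm U T p)) +
      Real.logb 2 (∑' p, zterm U T p)) := by
  obtain ⟨p₀, -, hp₀⟩ := hU.exists_length_eq_H []
  have hp₀_domain : p₀ ∈ U.domain := Part.dom_iff_mem.2 ⟨_, hp₀⟩
  obtain ⟨K, m₀, F, h⟩ := Computer.exists_approximatedByStages hTc hT0 hT1 hp₀_domain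
  set S := entropy T (U.energy T) (U.partitionFunction T)
  have hbits : ∀ n, bits (S + K) n = bits S n := bits_add_natCast S K
  have hrandom := h.chaitinRandom hU hT0
  have hcompressible := h.dCompressible hU hT0 hT1
  simp only [ChaitinRandom, DCompressible, hbits] at hrandom hcompressible
  have hleft := h.leftComputable_sub_natCast K
  rw [add_sub_cancel_right] at hleft
  exact ⟨U.summable_boltzmann hT0 hT1, U.summable_length_mul_boltzmann hT0 hT1,
    (boltzmann_pos T p₀).trans_le (Computer.boltzmann_le_partitionFunction hT0 hT1 hp₀_domain),
    hleft, hrandom, hcompressible⟩
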